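/- arXiv:2201.00984 — 3 statements merged into one kernel-verified Lean document; each statement's English description precedes it below -/
import Mathlib

section
/- Let (R, m) be a Cohen–Macaulay commutative Noetherian local ring of dimension 1, and let I be an ideal of R of positive height such that mI = xI for some R-regular element x ∈ m (i.e., I is an Ulrich R-module). Then for every finitely generated R-module M and every integer n ≥ 1, the vanishing Tor_n^R(M, I) = 0 implies pd_R M ≤ n. In particular, I is a rigid-test module, and hence strongly rigid. -/
open CategoryTheory IsLocalRing

section Prelim

variable (R : Type) [CommRing R]

/-- `Tor_i^R(M, N) = 0`. -/
noncomputable def TorVanish (M N : Type) [AddCommGroup M] [Module R M]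
    [AddCommGroup N] [Module R N] (i : ℕ) : Prop :=
  Subsingleton (((Tor (ModuleCat R) i).obj (ModuleCat.of R M)).obj (ModuleCat.of R N))

/-- `Ext_R^i(M, N) = 0`. -/
noncomputable def ExtVanish (M N : Type) [AddCommGroup M] [Module R M]
    [AddCommGroup N] [Module R N] (i : ℕ) : Prop :=
  Subsingleton (((Ext R (ModuleCat R) i).obj (Opposite.op (ModuleCat.of R M))).obj
    (ModuleCat.of R N))

/-- `pd_R M < n`, expressed by the standard characterization
`Ext_R^i(M, -) = 0` for all `i ≥ n`. -/
def ProjDimLT (M : Type) [AddCommGroup M] [Module R M] (n : ℕ) : Prop :=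
  ∀ (N : ModuleCat R) (i : ℕ), n ≤ i → ExtVanish R M N i

/-- `pd_R M < ∞`. -/
def ProjDimFinite (M : Type) [AddCommGroup M] [Module R M] : Prop :=
  ∃ n, ProjDimLT R M n

/-- `id_R M < n`, expressed by the standard characterization
`Ext_R^i(-, M) = 0` for all `i ≥ n`. -/
def InjDimLT (M : Type) [AddCommGroup M] [Module R M] (n : ℕ) : Prop :=
  ∀ (N : ModuleCat R) (i : ℕ), n ≤ i → ExtVanish R N M i

/-- `id_R M < ∞`. -/
def InjDimFinite (M : Type) [AddCommGroup M] [Module R M] : Prop :=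
  ∃ n, InjDimLT R M n

/-- `M` is a Tor-rigid `R`-module. -/
def TorRigid (M : Type) [AddCommGroup M] [Module R M] : Prop :=
  ∀ (N : ModuleCat R), Module.Finite R N → ∀ n : ℕ, 1 ≤ n → TorVanish R M N n →
    ∀ i : ℕ, n ≤ i → TorVanish R M N i

variable [IsLocalRing R]

/-- The depth of `M`: the supremum of lengths of `M`-regular sequences contained in
the maximal ideal. -/
noncomputable def depth (M : Type) [AddCommGroup M] [Module R M] : ℕ∞ :=
  sSup {n : ℕ∞ | ∃ rs : List R, (∀ x ∈ rs, x ∈ maximalIdeal R) ∧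
    RingTheory.Sequence.IsRegular M rs ∧ (rs.length : ℕ∞) = n}

/-- The dimension of a module, i.e. the Krull dimension of `R ⧸ ann M`. -/
noncomputable def moduleDim (M : Type) [AddCommGroup M] [Module R M] : WithBot ℕ∞ :=
  ringKrullDim (R ⧸ Module.annihilator R M)

/-- `M` is an Ulrich `R`-module of dimension `s` : `M` is nonzero, Cohen–Macaulay of
dimension `s`, and there is an `M`-regular sequence `x₁, …, x_s` in the maximal ideal
with `mM = (x₁, …, x_s)M`. -/
def IsUlrich (M : Type) [AddCommGroup M] [Module R M] (s : ℕ) : Prop :=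
  Nontrivial M ∧ moduleDim R M = (s : ℕ∞) ∧ depth R M = (s : ℕ∞) ∧
  ∃ rs : List R, rs.length = s ∧ (∀ x ∈ rs, x ∈ maximalIdeal R) ∧
    RingTheory.Sequence.IsRegular M rs ∧
    (maximalIdeal R) • (⊤ : Submodule R M) = (Ideal.ofList rs) • ⊤

/-- `R` is a regular local ring: the maximal ideal is generated by `dim R` elements. -/
def IsRegularLocal : Prop :=
  ∃ s : Finset R, Ideal.span (s : Set R) = maximalIdeal R ∧
    (s.card : WithBot ℕ∞) = ringKrullDim R

/-- `R` (of dimension `d`) has minimal multiplicity: there is an `R`-regular sequence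
`x₁, …, x_d` in the maximal ideal `m` with `m² = (x₁, …, x_d)m`. -/
def HasMinimalMultiplicity (d : ℕ) : Prop :=
  ∃ rs : List R, rs.length = d ∧ (∀ x ∈ rs, x ∈ maximalIdeal R) ∧
    RingTheory.Sequence.IsWeaklyRegular R rs ∧
    maximalIdeal R ^ 2 = Ideal.ofList rs * maximalIdeal R

/-- The `n`-th Betti number of `M` over the local ring `R`, i.e. the dimension over the
residue field `k = R ⧸ m` of `Tor_n^R(M, k)` (which is an `m`-torsion module, so we take
the dimension of its reduction mod `m`). -/
noncomputable def betti (M : Type) [AddCommGroup M] [Module R M] (n : ℕ) : ℕ :=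
  Module.finrank (R ⧸ maximalIdeal R)
    ((((Tor (ModuleCat R) n).obj (ModuleCat.of R M)).obj
        (ModuleCat.of R (R ⧸ maximalIdeal R))) ⧸
      (maximalIdeal R • (⊤ : Submodule R
        (((Tor (ModuleCat R) n).obj (ModuleCat.of R M)).obj
          (ModuleCat.of R (R ⧸ maximalIdeal R))))))

end Prelim

section Helpers
open Limits

theorem aux_ann {R : Type} [CommRing R] [IsNoetherianRing R] [IsLocalRing R]
    (hdim : ringKrullDim R = 1) (I : Ideal R) (hht : ∀ p ∈ minimalPrimes R, ¬ I ≤ p)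
    (x : R) (hx : x ∈ maximalIdeal R) (hr : IsSMulRegular R x) (v : R)
    (hv : ∀ a ∈ I, a * v = 0) : v = 0 := by
  by_contra h0
  obtain ⟨p, hp, hle⟩ := exists_le_isAssociatedPrime_of_isNoetherianRing R v h0
  have hIp : I ≤ p := fun a ha => hle (by
    simpa [Submodule.mem_colon_singleton] using hv a ha)
  have := hp.isPrime
  have hK : Ring.KrullDimLE 1 R := by
    rw [Ring.krullDimLE_iff, hdim]; rfl
  rcases Ring.krullDimLE_one_iff.1 hK p hp.isPrime with h | h
  · exact hht p h hIp
  · have hpm := IsLocalRing.eq_maximalIdeal h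
    rw [← hpm] at hx
    obtain ⟨w, hw⟩ := hp.2
    rw [hw] at hx
    obtain ⟨k, hk⟩ := hx
    have hk' : x ^ k * w = 0 := by
      simpa [Submodule.mem_colon_singleton] using hk
    have : w = 0 := (hr.pow k) (by simpa using hk')
    subst this
    apply hp.isPrime.ne_top
    rw [hw]
    rw [Ideal.eq_top_iff_one]; exact ⟨1, by simp [Submodule.mem_colon_singleton]⟩

theorem exists_min_gens {R : Type} [CommRing R] [IsLocalRing R]
    (K : Type) [AddCommGroup K] [Module R K] [Module.Finite R K] :
    ∃ (b : ℕ) (k : Fin b → K), Submodule.span R (Set.range k) = ⊤ ∧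
      ∀ r : Fin b → R, ∑ i, r i • k i = 0 → ∀ i, r i ∈ maximalIdeal R := by
  classical
  have hex : ∃ b : ℕ, ∃ k : Fin b → K, Submodule.span R (Set.range k) = ⊤ :=
    Module.Finite.exists_fin
  obtain ⟨k, hk⟩ := Nat.find_spec hex
  refine ⟨_, k, hk, fun r hr i => ?_⟩
  have hmin := fun m (hm : m < Nat.find hex) => Nat.find_min hex hm
  generalize Nat.find hex = b at *
  cases b with
  | zero => exact i.elim0
  | succ b =>
    by_contra hu
    have hu : IsUnit (r i) := by simpa using hu
    apply hmin b (Nat.lt_succ_self b)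
    refine ⟨k ∘ i.succAbove, ?_⟩
    rw [eq_top_iff, ← hk, Submodule.span_le]
    rintro _ ⟨j, rfl⟩
    rcases Fin.eq_self_or_eq_succAbove i j with rfl | ⟨j, rfl⟩
    · rw [Fin.sum_univ_succAbove _ j] at hr
      have h2 : r j • k j ∈ Submodule.span R (Set.range (k ∘ j.succAbove)) := by
        rw [eq_neg_of_add_eq_zero_left hr]
        exact neg_mem (sum_mem fun l _ => Submodule.smul_mem _ _
          (Submodule.subset_span ⟨l, rfl⟩))
      obtain ⟨u, hu⟩ := hu
      rw [← hu] at h2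
      have := Submodule.smul_mem _ ((u⁻¹ : Rˣ) : R) h2
      simpa [smul_smul] using this
    · exact Submodule.subset_span ⟨j, rfl⟩

theorem core_alg {R : Type} [CommRing R] [IsNoetherianRing R] [IsLocalRing R]
    (I : Ideal R) (x : R) (hx : x ∈ maximalIdeal R) (hr : IsSMulRegular R x)
    (hI : maximalIdeal R * I = Ideal.span {x} * I)
    (hann : ∀ v : R, (∀ a ∈ I, a * v = 0) → v = 0)
    (K : Type) [AddCommGroup K] [Module R K] [Module.Finite R K] (ι : Type) 
    (f : K →ₗ[R] (ι →₀ R)) (hf : Function.Injective f)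
    (hinj : Function.Injective (f.rTensor I)) : Module.Free R K := by
  classical
  obtain ⟨b, k, hk, hmin⟩ := exists_min_gens (R := R) K
  let Z : Submodule R (Fin b → R) :=
    { carrier := {y | (∀ i, y i ∈ I) ∧ ∑ i, y i • k i = 0}
      add_mem' := fun {y z} hy hz => ⟨fun i => I.add_mem (hy.1 i) (hz.1 i), by
        simp [add_smul, Finset.sum_add_distrib, hy.2, hz.2]⟩
      zero_mem' := ⟨fun i => I.zero_mem, by simp⟩
      smul_mem' := fun c y hy => ⟨fun i => I.mul_mem_left c (hy.1 i), by
        simp [mul_smul, ← Finset.smul_sum, hy.2]⟩ }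
  have hZ : ∀ y ∈ Z, ∃ w ∈ Z, y = x • w := by
    rintro y ⟨hyI, hy0⟩
    have h1 : ∑ i, k i ⊗ₜ[R] (⟨y i, hyI i⟩ : I) = 0 := by
      apply hinj
      rw [map_zero, map_sum]
      apply (TensorProduct.finsuppScalarLeft R I ι).injective
      rw [map_zero, map_sum]
      ext j
      simp only [LinearMap.rTensor_tmul, Finsupp.finsetSum_apply,
        TensorProduct.finsuppScalarLeft_apply_tmul_apply]
      have := congrArg (fun z => f z j) hy0
      simp only [map_sum, map_smul, map_zero, Finsupp.finsetSum_apply, Finsupp.smul_apply,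
        Finsupp.zero_apply] at this
      simpa [mul_comm] using this
    obtain ⟨κ, a, y', hy', ha⟩ := TensorProduct.vanishesTrivially_of_sum_tmul_eq_zero R hk h1
    have h2 : ∀ i, ∃ w ∈ I, x * w = y i := by
      intro i
      have : y i ∈ maximalIdeal R * I := by
        have := congrArg Subtype.val (hy' i)
        simp only at this
        rw [this]
        simp only [AddSubmonoidClass.coe_finsetSum, Submodule.coe_smul, smul_eq_mul]
        exact sum_mem fun l _ => Ideal.mul_mem_mul (hmin (fun i => a i l) (ha l) i) (y' l).2
      rw [hI] at this
      simpa using Ideal.mem_span_singleton_mul.1 this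
    choose w hwI hw using h2
    refine ⟨w, ⟨hwI, ?_⟩, funext fun i => (hw i).symm⟩
    apply hf
    rw [map_zero]
    ext j
    apply hr
    have : x • ∑ i, w i • k i = 0 := by
      rw [← hy0, Finset.smul_sum]
      exact Finset.sum_congr rfl fun i _ => by rw [smul_smul, hw]
    have := congrArg (fun z => f z j) this
    simpa using this
  have hZ0 : Z = ⊥ := by
    apply Submodule.eq_bot_of_le_smul_of_le_jacobson_bot (maximalIdeal R) Z
      (IsNoetherian.noetherian Z)
    · intro y hy
      obtain ⟨w, hw, rfl⟩ := hZ y hy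
      exact Submodule.smul_mem_smul hx hw
    · exact IsLocalRing.maximalIdeal_le_jacobson _
  have hli : LinearIndependent R k := by
    rw [Fintype.linearIndependent_iff]
    intro r h i
    apply hann
    intro a ha
    have : a • r ∈ Z := ⟨fun i => I.mul_mem_right _ ha, by
      simp [mul_smul, ← Finset.smul_sum, h]⟩
    rw [hZ0] at this
    exact congrFun this i
  exact Module.Free.of_basis (Module.Basis.mk hli hk.ge)

section Splice
universe v u v' u'
variable {C : Type u} [Category.{v} C] [Abelian C]
  {D : Type u'} [Category.{v'} D] [Abelian D]

noncomputable def resPi {X : C} (Q : ProjectiveResolution X) : Q.complex.X 0 ⟶ X := Q.π.f 0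

theorem resPi_epi {X : C} (Q : ProjectiveResolution X) : Epi (resPi Q) :=
  inferInstanceAs (Epi (Q.π.f 0))

theorem resPi_w {X : C} (Q : ProjectiveResolution X) : Q.complex.d 1 0 ≫ resPi Q = 0 :=
  Q.complex_d_comp_π_f_zero

theorem resPi_exact {X : C} (Q : ProjectiveResolution X) :
    (ShortComplex.mk (Q.complex.d 1 0) (resPi Q) (resPi_w Q)).Exact := Q.exact₀

noncomputable def spliceComplex (S : ShortComplex C) (Q : ProjectiveResolution S.X₁) :
    ChainComplex C ℕ :=
  ChainComplex.augment Q.complex (resPi Q ≫ S.f)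
    (by rw [← Category.assoc, resPi_w, zero_comp])

theorem splice_exact_one (S : ShortComplex C) (hS : S.ShortExact) (Q : ProjectiveResolution S.X₁) :
    (ShortComplex.mk (Q.complex.d 1 0) (resPi Q ≫ S.f)
      (by rw [← Category.assoc, resPi_w, zero_comp])).Exact := by
  have := hS.mono_f
  refine (ShortComplex.exact_iff_of_epi_of_isIso_of_mono (S₁ := ShortComplex.mk (Q.complex.d 1 0) (resPi Q) (resPi_w Q))
     (S₂ := ShortComplex.mk (Q.complex.d 1 0) (resPi Q ≫ S.f)
      (by rw [← Category.assoc, resPi_w, zero_comp]))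
     ⟨𝟙 _, 𝟙 _, S.f, by simp, by simp⟩).1 (resPi_exact Q)

theorem splice_exact_zero (S : ShortComplex C) (hS : S.ShortExact)
    (Q : ProjectiveResolution S.X₁) :
    (ShortComplex.mk (resPi Q ≫ S.f) S.g (by simp)).Exact := by
  have := resPi_epi Q
  refine (ShortComplex.exact_iff_of_epi_of_isIso_of_mono
     (S₁ := ShortComplex.mk (resPi Q ≫ S.f) S.g (by simp))
     (S₂ := S)
     ⟨resPi Q, 𝟙 _, 𝟙 _, by simp, by simp⟩).2 hS.exact

theorem splice_exactAt (S : ShortComplex C) (hS : S.ShortExact)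
    (Q : ProjectiveResolution S.X₁) (n : ℕ) : (spliceComplex S Q).ExactAt (n + 1) := by
  rw [HomologicalComplex.exactAt_iff' _ (n + 1 + 1) (n + 1) n (by simp) (by simp)]
  cases n with
  | zero => exact splice_exact_one S hS Q
  | succ n => exact Q.exact_succ n

noncomputable def splice (S : ShortComplex C) (hS : S.ShortExact) [Projective S.X₂]
    (Q : ProjectiveResolution S.X₁) : ProjectiveResolution S.X₃ where
  complex := spliceComplex S Q
  projective n := by
    cases n with
    | zero => exact inferInstanceAs (Projective S.X₂)
    | succ n => exact inferInstanceAs (Projective (Q.complex.X n))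
  π := (ChainComplex.toSingle₀Equiv _ _).symm ⟨S.g, by
    change (resPi Q ≫ S.f) ≫ S.g = 0
    simp⟩
  quasiIso := ⟨fun n => by
    cases n
    · rw [ChainComplex.quasiIsoAt₀_iff, ShortComplex.quasiIso_iff_of_zeros']
      · have := hS.epi_g
        refine (ShortComplex.exact_and_epi_g_iff_of_iso ?_).2
          ⟨splice_exact_zero S hS Q, hS.epi_g⟩
        refine ShortComplex.isoMk (Iso.refl _) (Iso.refl _) (Iso.refl _) ?_ ?_
        · erw [Category.id_comp, Category.comp_id]; rfl
        · erw [Category.id_comp, Category.comp_id]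
          exact (ChainComplex.toSingle₀Equiv_symm_apply_f_zero (C := spliceComplex S Q) (X := S.X₃) S.g _).symm
      all_goals rfl
    · rw [quasiIsoAt_iff_exactAt']
      · apply splice_exactAt _ hS
      · apply ChainComplex.exactAt_succ_single_obj⟩

theorem leftDerived_isZero_iff [EnoughProjectives C] (F : C ⥤ D) [F.Additive] {X : C} (P : ProjectiveResolution X)
    (n : ℕ) : IsZero ((F.leftDerived (n + 1)).obj X) ↔
      (ShortComplex.mk (F.map (P.complex.d (n + 2) (n + 1))) (F.map (P.complex.d (n + 1) n))
        (by rw [← F.map_comp, P.complex.d_comp_d, F.map_zero])).Exact := by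
  rw [(P.isoLeftDerivedObj F (n + 1)).isZero_iff]
  erw [← HomologicalComplex.exactAt_iff_isZero_homology]
  rw [HomologicalComplex.exactAt_iff' _ (n + 1 + 1) (n + 1) n (by simp) (by simp)]
  rfl

theorem leftDerived_shift [EnoughProjectives C] (F : C ⥤ D) [F.Additive] (S : ShortComplex C)
    (hS : S.ShortExact) [Projective S.X₂] (n : ℕ) :
    IsZero ((F.leftDerived (n + 2)).obj S.X₃) ↔ IsZero ((F.leftDerived (n + 1)).obj S.X₁) := by
  rw [leftDerived_isZero_iff F (splice S hS (ProjectiveResolution.of S.X₁)),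
    leftDerived_isZero_iff F (ProjectiveResolution.of S.X₁)]
  rfl

theorem leftDerived_one [EnoughProjectives C] (F : C ⥤ D) [F.Additive] [PreservesFiniteColimits F]
    (S : ShortComplex C) (hS : S.ShortExact) [Projective S.X₂]
    (h : IsZero ((F.leftDerived 1).obj S.X₃)) : Mono (F.map S.f) := by
  let Q := ProjectiveResolution.of S.X₁
  rw [leftDerived_isZero_iff F (splice S hS Q)] at h
  have h : (ShortComplex.mk (F.map (Q.complex.d 1 0)) (F.map (resPi Q ≫ S.f))
    (by rw [← F.map_comp, ← Category.assoc, resPi_w, zero_comp, F.map_zero])).Exact := h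
  have := resPi_epi Q
  have hw : F.map (Q.complex.d 1 0) ≫ F.map (resPi Q) = 0 := by
    rw [← F.map_comp, resPi_w, F.map_zero]
  rw [Preadditive.mono_iff_cancel_zero]
  intro P g hg
  obtain ⟨A', π, hπ, y, hy⟩ := surjective_up_to_refinements_of_epi (F.map (resPi Q)) g
  obtain ⟨A'', π', hπ', y', hy'⟩ := h.exact_up_to_refinements y (by
    have e : y ≫ F.map (resPi Q ≫ S.f) = 0 := by
      have e1 : F.map (resPi Q ≫ S.f) = F.map (resPi Q) ≫ F.map S.f := F.map_comp _ _
      exact (congrArg (fun t => y ≫ t) e1).trans (by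
        rw [← Category.assoc, ← hy, Category.assoc, hg, comp_zero])
    exact e)
  dsimp at hy'
  rw [← cancel_epi π, ← cancel_epi π', hy, reassoc_of% hy', hw]
  simp

theorem leftDerived_of_pd [EnoughProjectives C] (n : ℕ) : ∀ (X : C),
    HasProjectiveDimensionLT X (n + 1) → ∀ (F : C ⥤ D) [F.Additive] (i : ℕ), n + 1 ≤ i →
    IsZero ((F.leftDerived i).obj X) := by
  induction n with
  | zero =>
    intro X h F _ i hi
    have : Projective X := projective_iff_hasProjectiveDimensionLT_one.2 h
    obtain ⟨j, rfl⟩ := Nat.exists_eq_add_of_le' hi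
    exact F.isZero_leftDerived_obj_projective_succ j X
  | succ n ih =>
    intro X h F _ i hi
    let S : ShortComplex C := ShortComplex.mk (kernel.ι (Projective.π X)) (Projective.π X) (by simp)
    have hS : S.ShortExact :=
      { exact := ShortComplex.exact_kernel _
        mono_f := inferInstanceAs (Mono (kernel.ι (Projective.π X)))
        epi_g := inferInstanceAs (Epi (Projective.π X)) }
    have : Projective S.X₂ := inferInstanceAs (Projective (Projective.over X))
    obtain ⟨j, rfl⟩ := Nat.exists_eq_add_of_le' hi
    have h1 := (hS.hasProjectiveDimensionLT_X₃_iff n this).1 h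
    exact (leftDerived_shift F S hS (j + n)).2 (ih S.X₁ h1 F (j + n + 1) (by omega))

end Splice

section TorPart
open TensorProduct
variable {R : Type} [CommRing R]

theorem torVanish_iff_isZero (M N : ModuleCat.{0} R) (n : ℕ) :
    TorVanish R M N n ↔
      IsZero (((((MonoidalCategory.tensoringLeft (ModuleCat.{0} R)).obj M)).leftDerived n).obj N) :=
  ModuleCat.isZero_iff_subsingleton.symm

theorem torVanish_iff (M N : ModuleCat.{0} R) (P : ProjectiveResolution N) (n : ℕ) :
    TorVanish R M N (n + 1) ↔
      Function.Exact (LinearMap.lTensor M (P.complex.d (n + 2) (n + 1)).hom)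
        (LinearMap.lTensor M (P.complex.d (n + 1) n).hom) := by
  rw [torVanish_iff_isZero, leftDerived_isZero_iff _ P,
    ShortComplex.ShortExact.moduleCat_exact_iff_function_exact]
  rfl

theorem chase {K F M Q₂ Q₁ Q₀ : Type} [AddCommGroup K] [AddCommGroup F] [AddCommGroup M]
    [AddCommGroup Q₂] [AddCommGroup Q₁] [AddCommGroup Q₀] [Module R K] [Module R F] [Module R M]
    [Module R Q₂] [Module R Q₁] [Module R Q₀] [Module.Flat R Q₀]
    (i : K →ₗ[R] F) (p : F →ₗ[R] M) (hi : Function.Injective i) (hip : Function.Exact i p)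
    (hp : Function.Surjective p) (d₂ : Q₂ →ₗ[R] Q₁) (d₁ : Q₁ →ₗ[R] Q₀) (hd : d₁ ∘ₗ d₂ = 0)
    (hM : Function.Exact (d₂.lTensor M) (d₁.lTensor M))
    (w : K ⊗[R] Q₀) (u : F ⊗[R] Q₁) (hu : d₁.lTensor F u = i.rTensor Q₀ w) :
    ∃ y, d₁.lTensor K y = w := by
  have c1 : ∀ {A B : Type} [AddCommGroup A] [AddCommGroup B] [Module R A] [Module R B]
      {X Y : Type} [AddCommGroup X] [AddCommGroup Y] [Module R X] [Module R Y]
      (f : A →ₗ[R] B) (g : X →ₗ[R] Y) (z : A ⊗[R] X),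
      g.lTensor B (f.rTensor X z) = f.rTensor Y (g.lTensor A z) := by
    intros A B _ _ _ _ X Y _ _ _ _ f g z
    rw [← LinearMap.comp_apply, ← LinearMap.comp_apply, LinearMap.lTensor_comp_rTensor,
      LinearMap.rTensor_comp_lTensor]
  have hp0 : p ∘ₗ i = 0 := hip.linearMap_comp_eq_zero
  have h1 : d₁.lTensor M (p.rTensor Q₁ u) = 0 := by
    rw [c1, hu, ← LinearMap.comp_apply, ← LinearMap.rTensor_comp, hp0]
    simp
  obtain ⟨v, hv⟩ := (hM _).1 h1
  obtain ⟨v', rfl⟩ := LinearMap.rTensor_surjective Q₂ hp v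
  have h2 : p.rTensor Q₁ (u - d₂.lTensor F v') = 0 := by
    rw [map_sub, ← c1, hv, sub_self]
  obtain ⟨y, hy⟩ := (rTensor_exact Q₁ hip hp _).1 h2
  refine ⟨y, Module.Flat.rTensor_preserves_injective_linearMap i hi ?_⟩
  rw [← c1, hy, map_sub, hu, ← LinearMap.comp_apply, ← LinearMap.lTensor_comp, hd]
  simp

theorem tor_first_step (I M K : ModuleCat.{0} R) (b : ℕ) (i : K →ₗ[R] (Fin b →₀ R))
    (p : (Fin b →₀ R) →ₗ[R] M) (hi : Function.Injective i) (hip : Function.Exact i p)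
    (hp : Function.Surjective p) (n : ℕ) (h : TorVanish R M I (n + 2)) :
    TorVanish R K I (n + 1) := by
  let P := ProjectiveResolution.of I
  have hfl : ∀ j, Module.Flat R (P.complex.X j) := fun j => by
    have : Module.Projective R (P.complex.X j) :=
      (IsProjective.iff_projective (P.complex.X j)).2 (P.projective j)
    infer_instance
  have hdd : ∀ j, (P.complex.d (j + 1) j).hom ∘ₗ (P.complex.d (j + 2) (j + 1)).hom = 0 :=
    fun j => by rw [← ModuleCat.hom_comp, P.complex.d_comp_d]; rfl
  rw [torVanish_iff _ _ P] at h ⊢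
  have hF : Function.Exact ((P.complex.d (n + 2) (n + 1)).hom.lTensor (Fin b →₀ R))
      ((P.complex.d (n + 1) n).hom.lTensor (Fin b →₀ R)) := by
    apply Module.Flat.lTensor_exact
    exact (ShortComplex.ShortExact.moduleCat_exact_iff_function_exact _).1 (P.exact_succ n)
  intro w
  constructor
  · intro hw
    have : (P.complex.d (n + 1) n).hom.lTensor (Fin b →₀ R)
        (i.rTensor (P.complex.X (n + 1)) w) = 0 := by
      rw [← LinearMap.comp_apply, LinearMap.lTensor_comp_rTensor,
        ← LinearMap.rTensor_comp_lTensor, LinearMap.comp_apply, hw, map_zero]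
    obtain ⟨u, hu⟩ := (hF _).1 this
    exact chase i p hi hip hp _ _ (hdd (n + 1)) h w u hu
  · rintro ⟨y, rfl⟩
    rw [← LinearMap.comp_apply, ← LinearMap.lTensor_comp, hdd]
    simp

theorem tor_first_one (I M K : ModuleCat.{0} R) (b : ℕ) (i : K →ₗ[R] (Fin b →₀ R))
    (p : (Fin b →₀ R) →ₗ[R] M) (hi : Function.Injective i) (hip : Function.Exact i p)
    (hp : Function.Surjective p) (h : TorVanish R M I 1) :
    Function.Injective (i.rTensor I) := by
  let P := ProjectiveResolution.of I
  have hfl : ∀ j, Module.Flat R (P.complex.X j) := fun j => by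
    have : Module.Projective R (P.complex.X j) :=
      (IsProjective.iff_projective (P.complex.X j)).2 (P.projective j)
    infer_instance
  have hdd : ∀ j, (P.complex.d (j + 1) j).hom ∘ₗ (P.complex.d (j + 2) (j + 1)).hom = 0 :=
    fun j => by rw [← ModuleCat.hom_comp, P.complex.d_comp_d]; rfl
  rw [torVanish_iff _ _ P] at h
  have hex : Function.Exact (P.complex.d 1 0).hom (resPi P).hom :=
    (ShortComplex.ShortExact.moduleCat_exact_iff_function_exact _).1 (resPi_exact P)
  have hs : Function.Surjective (resPi P).hom :=
    (ModuleCat.epi_iff_surjective _).1 (resPi_epi P)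
  rw [injective_iff_map_eq_zero]
  intro z hz
  obtain ⟨w, rfl⟩ := LinearMap.lTensor_surjective K hs z
  have : (resPi P).hom.lTensor (Fin b →₀ R) (i.rTensor (P.complex.X 0) w) = 0 := by
    rw [← hz, ← LinearMap.comp_apply, ← LinearMap.comp_apply, LinearMap.lTensor_comp_rTensor,
      LinearMap.rTensor_comp_lTensor]
  obtain ⟨u, hu⟩ := (lTensor_exact (Fin b →₀ R) hex hs _).1 this
  obtain ⟨y, rfl⟩ := chase i p hi hip hp _ _ (hdd 0) h w u hu
  exact (lTensor_exact K hex hs _).2 ⟨y, rfl⟩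

theorem ses_mk (M K : ModuleCat.{0} R) (b : ℕ) (i : K →ₗ[R] (Fin b →₀ R))
    (p : (Fin b →₀ R) →ₗ[R] M) (hi : Function.Injective i) (hip : Function.Exact i p)
    (hp : Function.Surjective p) :
    (ShortComplex.mk (X₂ := ModuleCat.of R (Fin b →₀ R)) (ModuleCat.ofHom i) (ModuleCat.ofHom p)
      (by rw [← ModuleCat.ofHom_comp, hip.linearMap_comp_eq_zero]; rfl)).ShortExact where
  exact := (ShortComplex.ShortExact.moduleCat_exact_iff_function_exact _).2 hip
  mono_f := (ModuleCat.mono_iff_injective _).2 hi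
  epi_g := (ModuleCat.epi_iff_surjective _).2 hp

theorem free_proj (b : ℕ) : Projective (ModuleCat.of R (Fin b →₀ R)) :=
  (IsProjective.iff_projective (R := R) (Fin b →₀ R)).1 inferInstance

theorem tor_second_step (I M K : ModuleCat.{0} R) (b : ℕ) (i : K →ₗ[R] (Fin b →₀ R))
    (p : (Fin b →₀ R) →ₗ[R] M) (hi : Function.Injective i) (hip : Function.Exact i p)
    (hp : Function.Surjective p) (n : ℕ) (h : TorVanish R I M (n + 2)) :
    TorVanish R I K (n + 1) := by
  rw [torVanish_iff_isZero] at h ⊢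
  have := free_proj (R := R) b
  exact (leftDerived_shift _ _ (ses_mk M K b i p hi hip hp) n).1 h

theorem tor_second_one (I M K : ModuleCat.{0} R) (b : ℕ) (i : K →ₗ[R] (Fin b →₀ R))
    (p : (Fin b →₀ R) →ₗ[R] M) (hi : Function.Injective i) (hip : Function.Exact i p)
    (hp : Function.Surjective p) (h : TorVanish R I M 1) :
    Function.Injective (i.rTensor I) := by
  rw [torVanish_iff_isZero] at h
  have := free_proj (R := R) b
  have hF : PreservesFiniteColimits
      ((MonoidalCategory.tensoringLeft (ModuleCat.{0} R)).obj I) :=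
    inferInstanceAs (PreservesFiniteColimits (MonoidalCategory.tensorLeft I))
  have h1 := leftDerived_one _ _ (ses_mk M K b i p hi hip hp) h
  have h2 : Function.Injective (i.lTensor I) := (ModuleCat.mono_iff_injective _).1 h1
  exact (LinearMap.lTensor_inj_iff_rTensor_inj I i).1 h2

theorem pd_induction [IsNoetherianRing R] [IsLocalRing R]
    (I : Ideal R) (x : R) (hx : x ∈ maximalIdeal R) (hr : IsSMulRegular R x)
    (hI : maximalIdeal R * I = Ideal.span {x} * I)
    (hann : ∀ v : R, (∀ a ∈ I, a * v = 0) → v = 0)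
    (H : ModuleCat.{0} R → ℕ → Prop)
    (hstep : ∀ (M K : ModuleCat.{0} R) (b : ℕ) (i : K →ₗ[R] (Fin b →₀ R))
      (p : (Fin b →₀ R) →ₗ[R] M), Function.Injective i → Function.Exact i p →
      Function.Surjective p → ∀ n, H M (n + 2) → H K (n + 1))
    (hone : ∀ (M K : ModuleCat.{0} R) (b : ℕ) (i : K →ₗ[R] (Fin b →₀ R))
      (p : (Fin b →₀ R) →ₗ[R] M), Function.Injective i → Function.Exact i p →
      Function.Surjective p → H M 1 → Function.Injective (i.rTensor I))
    (n : ℕ) : ∀ M : ModuleCat.{0} R, Module.Finite R M → H M (n + 1) →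
      HasProjectiveDimensionLT M (n + 2) := by
  induction n with
  | zero =>
    intro M hM h
    obtain ⟨b, k, hk⟩ := Module.Finite.exists_fin (R := R) (M := M)
    let p := Finsupp.linearCombination R k
    have hp : Function.Surjective p := by
      rw [← LinearMap.range_eq_top, Finsupp.range_linearCombination, hk]
    have hip : Function.Exact (LinearMap.ker p).subtype p := LinearMap.exact_subtype_ker_map p
    have hi : Function.Injective (LinearMap.ker p).subtype := Subtype.val_injective
    refine ((ses_mk M (ModuleCat.of R (LinearMap.ker p)) b _ p hi hip hp).hasProjectiveDimensionLT_X₃_iff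
      0 (free_proj b)).2 ?_
    have := core_alg I x hx hr hI hann (LinearMap.ker p) (Fin b) _ hi
      (hone M (ModuleCat.of R (LinearMap.ker p)) b _ p hi hip hp h)
    exact projective_iff_hasProjectiveDimensionLT_one.1
      ((IsProjective.iff_projective (R := R) (LinearMap.ker p)).1 inferInstance)
  | succ n ih =>
    intro M hM h
    obtain ⟨b, k, hk⟩ := Module.Finite.exists_fin (R := R) (M := M)
    let p := Finsupp.linearCombination R k
    have hp : Function.Surjective p := by
      rw [← LinearMap.range_eq_top, Finsupp.range_linearCombination, hk]
    have hip : Function.Exact (LinearMap.ker p).subtype p := LinearMap.exact_subtype_ker_map p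
    have hi : Function.Injective (LinearMap.ker p).subtype := Subtype.val_injective
    refine ((ses_mk M (ModuleCat.of R (LinearMap.ker p)) b _ p hi hip hp).hasProjectiveDimensionLT_X₃_iff
      (n + 1) (free_proj b)).2 ?_
    exact ih (ModuleCat.of R (LinearMap.ker p))
      (inferInstanceAs (Module.Finite R (LinearMap.ker p)))
      (hstep M (ModuleCat.of R (LinearMap.ker p)) b _ p hi hip hp n h)

theorem projDimLT_of (M : ModuleCat.{0} R) (n : ℕ) (h : HasProjectiveDimensionLT M (n + 1)) :
    ProjDimLT R M (n + 1) := by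
  intro N i hi
  have := leftDerived_of_pd n M h ((linearYoneda R (ModuleCat.{0} R)).obj N).rightOp i hi
  exact ModuleCat.isZero_iff_subsingleton.1 this.unop

end TorPart

end Helpers

theorem statement9 (R : Type) [CommRing R] [IsNoetherianRing R] [IsLocalRing R]
    (hdim : ringKrullDim R = 1) (hCM : depth R R = 1)
    (I : Ideal R) (hht : ∀ p ∈ minimalPrimes R, ¬ I ≤ p)
    (hUlrich : ∃ x ∈ maximalIdeal R, IsSMulRegular R x ∧
      maximalIdeal R * I = Ideal.span {x} * I) :
    (∀ (M : ModuleCat R), Module.Finite R M → ∀ n : ℕ, 1 ≤ n →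
      TorVanish R M (↥I) n → ProjDimLT R M (n + 1)) ∧
    TorRigid R (↥I) ∧
    (∀ (N : ModuleCat R), Module.Finite R N →
      (∃ n₀ : ℕ, ∀ i : ℕ, n₀ ≤ i → TorVanish R (↥I) N i) → ProjDimFinite R N) ∧
    (∀ (N : ModuleCat R), Module.Finite R N →
      (∃ i : ℕ, 1 ≤ i ∧ TorVanish R (↥I) N i) → ProjDimFinite R N) := by
  obtain ⟨x, hx, hr, hI⟩ := hUlrich
  have hann : ∀ v : R, (∀ a ∈ I, a * v = 0) → v = 0 := fun v hv =>
    aux_ann hdim I hht x hx hr v hv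
  have A : ∀ (n : ℕ) (M : ModuleCat R), Module.Finite R M → TorVanish R M (↥I) (n + 1) →
      HasProjectiveDimensionLT M (n + 2) :=
    pd_induction I x hx hr hI hann (fun M n => TorVanish R M (↥I) n)
      (tor_first_step (ModuleCat.of R I)) (tor_first_one (ModuleCat.of R I))
  have B : ∀ (n : ℕ) (M : ModuleCat R), Module.Finite R M → TorVanish R (↥I) M (n + 1) →
      HasProjectiveDimensionLT M (n + 2) :=
    pd_induction I x hx hr hI hann (fun M n => TorVanish R (↥I) M n)
      (tor_second_step (ModuleCat.of R I)) (tor_second_one (ModuleCat.of R I))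
  have B' : ∀ (N : ModuleCat R), Module.Finite R N →
      (∃ i : ℕ, 1 ≤ i ∧ TorVanish R (↥I) N i) → ProjDimFinite R N := by
    rintro N hN ⟨i, hi, h⟩
    obtain ⟨n, rfl⟩ := Nat.exists_eq_add_of_le' hi
    exact ⟨_, projDimLT_of N (n + 1) (B n N hN h)⟩
  refine ⟨?_, ?_, ?_, B'⟩
  · intro M hM n hn h
    obtain ⟨n, rfl⟩ := Nat.exists_eq_add_of_le' hn
    exact projDimLT_of M (n + 1) (A n M hM h)
  · intro N hN n hn h i hi
    obtain ⟨n, rfl⟩ := Nat.exists_eq_add_of_le' hn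
    rcases hi.eq_or_lt with rfl | hlt
    · exact h
    · exact (torVanish_iff_isZero (ModuleCat.of R I) N i).2
        (leftDerived_of_pd (n + 1) N (B n N hN h) _ i hlt)
  · rintro N hN ⟨n₀, h⟩
    exact B' N hN ⟨n₀ + 1, by omega, h _ (by omega)⟩
end

section
/- Let (R, m, k) be a commutative Noetherian local ring and let M and N be Ulrich R-modules (possibly M = N). Then: (1) R is regular if and only if pd_R M < ∞; (2) R is regular if and only if N has finite injective dimension over R; (3) setting s = min{dim M, dim N}, the following are equivalent: (a) R is regular; (b) Ext_R^i(M, N) = 0 for all n ≤ i ≤ n+s for some n ≥ 1 with n + dim M ≥ depth_R N; (c) Tor_i^R(M, N) = 0 for all n ≤ i ≤ n+s for some n ≥ 1. -/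
open CategoryTheory IsLocalRing

open CategoryTheory IsLocalRing

section EVsec

variable {R : Type} [CommRing R]

def EV (R : Type) [CommRing R] (M N : Type) [AddCommGroup M] [Module R M]
    [AddCommGroup N] [Module R N] (n : ℕ) : Prop :=
  Subsingleton (Abelian.Ext (ModuleCat.of R M) (ModuleCat.of R N) n)

variable {A B C X Y : Type} [AddCommGroup A] [Module R A] [AddCommGroup B] [Module R B]
  [AddCommGroup C] [Module R C] [AddCommGroup X] [Module R X] [AddCommGroup Y] [Module R Y]

lemma EV.eq_zero {n : ℕ} (h : EV R X Y n)
    (e : Abelian.Ext (ModuleCat.of R X) (ModuleCat.of R Y) n) : e = 0 := h.elim _ _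

lemma EV.mk' {n : ℕ} (h : ∀ e : Abelian.Ext (ModuleCat.of R X) (ModuleCat.of R Y) n, e = 0) :
    EV R X Y n := ⟨fun a b => by rw [h a, h b]⟩

/-- the short complex -/
abbrev scx (f : A →ₗ[R] B) (g : B →ₗ[R] C) (h : Function.Exact f g) :
    ShortComplex (ModuleCat R) :=
  ShortComplex.mk (ModuleCat.ofHom f) (ModuleCat.ofHom g) (by
    ext x; exact h.apply_apply_eq_zero x)

lemma scx_exact {f : A →ₗ[R] B} {g : B →ₗ[R] C} (h : Function.Exact f g)
    (hf : Function.Injective f) (hg : Function.Surjective g) : (scx f g h).ShortExact where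
  exact := (ShortComplex.ShortExact.moduleCat_exact_iff_function_exact _).2 h
  mono_f := (ModuleCat.mono_iff_injective _).2 hf
  epi_g := (ModuleCat.epi_iff_surjective _).2 hg

section les
variable {f : A →ₗ[R] B} {g : B →ₗ[R] C} (h : Function.Exact f g)
    (hf : Function.Injective f) (hg : Function.Surjective g) {n : ℕ}
include h hf hg

lemma EV.cov3 (h1 : EV R X B n) (h2 : EV R X A (n+1)) : EV R X C n := EV.mk' fun e => by
  obtain ⟨x, hx⟩ := Abelian.Ext.covariant_sequence_exact₃ _ (scx_exact h hf hg) e rfl (h2.eq_zero _)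
  rw [← hx, show x = 0 from h1.eq_zero x]; exact Abelian.Ext.zero_comp ..

lemma EV.cov1 (h1 : EV R X C n) (h2 : EV R X B (n+1)) : EV R X A (n+1) := EV.mk' fun e => by
  obtain ⟨x, hx⟩ := Abelian.Ext.covariant_sequence_exact₁ _ (scx_exact h hf hg) e (h2.eq_zero _) rfl
  rw [← hx, show x = 0 from h1.eq_zero x]; exact Abelian.Ext.zero_comp ..

lemma EV.con3 (h1 : EV R A Y n) (h2 : EV R B Y (n+1)) : EV R C Y (n+1) := EV.mk' fun e => by
  obtain ⟨x, hx⟩ := Abelian.Ext.contravariant_sequence_exact₃ (scx_exact h hf hg) _ e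
    (h2.eq_zero _) (add_comm 1 n)
  rw [← hx, show x = 0 from h1.eq_zero x]; exact Abelian.Ext.comp_zero ..

lemma EV.con1 (h1 : EV R B Y n) (h2 : EV R C Y (n+1)) : EV R A Y n := EV.mk' fun e => by
  obtain ⟨x, hx⟩ := Abelian.Ext.contravariant_sequence_exact₁ (scx_exact h hf hg) _ e
    (add_comm 1 n) (h2.eq_zero _)
  rw [← hx, show x = 0 from h1.eq_zero x]; exact Abelian.Ext.comp_zero ..

lemma EV.con2 (h1 : EV R A Y n) (h2 : EV R C Y n) : EV R B Y n := EV.mk' fun e => by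
  obtain ⟨x, hx⟩ := Abelian.Ext.contravariant_sequence_exact₂ (scx_exact h hf hg) _ e
    (h1.eq_zero _)
  rw [← hx, show x = 0 from h2.eq_zero x]; exact Abelian.Ext.comp_zero ..

lemma EV.extend (h1 : EV R C Y 1) (φ : A →ₗ[R] Y) : ∃ ψ : B →ₗ[R] Y, ψ ∘ₗ f = φ := by
  obtain ⟨x, hx⟩ := Abelian.Ext.contravariant_sequence_exact₁ (scx_exact h hf hg) _
    (Abelian.Ext.mk₀ (ModuleCat.ofHom φ)) (add_zero 1) (h1.eq_zero _)
  obtain ⟨ψ, rfl⟩ := (Abelian.Ext.mk₀_bijective _ _).2 x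
  rw [Abelian.Ext.mk₀_comp_mk₀, (Abelian.Ext.mk₀_bijective _ _).1.eq_iff] at hx
  exact ⟨ψ.hom, by simpa using congrArg ModuleCat.Hom.hom hx⟩

lemma EV.lift (h1 : EV R X A 1) (φ : X →ₗ[R] C) : ∃ ψ : X →ₗ[R] B, g ∘ₗ ψ = φ := by
  obtain ⟨x, hx⟩ := Abelian.Ext.covariant_sequence_exact₃ _ (scx_exact h hf hg)
    (Abelian.Ext.mk₀ (ModuleCat.ofHom φ)) (zero_add 1) (h1.eq_zero _)
  obtain ⟨ψ, rfl⟩ := (Abelian.Ext.mk₀_bijective _ _).2 x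
  rw [Abelian.Ext.mk₀_comp_mk₀, (Abelian.Ext.mk₀_bijective _ _).1.eq_iff] at hx
  exact ⟨ψ.hom, by simpa using congrArg ModuleCat.Hom.hom hx⟩

end les

lemma EV.zero_iff : EV R X Y 0 ↔ Subsingleton (X →ₗ[R] Y) :=
  (Abelian.Ext.addEquiv₀.trans ModuleCat.homAddEquiv).toEquiv.subsingleton_congr

lemma EV.of_proj [Module.Projective R X] (n : ℕ) : EV R X Y (n+1) := by
  have : Projective (ModuleCat.of R X) := (IsProjective.iff_projective (R := R) X).1 inferInstance
  exact Abelian.Ext.subsingleton_of_projective _ _ n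

lemma EV.of_inj (hY : Module.Injective R Y) (n : ℕ) : EV R X Y (n+1) := by
  have : Injective (ModuleCat.of R Y) := Module.injective_object_of_injective_module R Y
  exact EV.mk' fun e => e.eq_zero_of_injective

lemma EV.retract_left (i : A →ₗ[R] B) (p : B →ₗ[R] A) (hp : p ∘ₗ i = LinearMap.id) {n : ℕ}
    (h : EV R B Y n) : EV R A Y n := EV.mk' fun e => by
  have h1 : ModuleCat.ofHom i ≫ ModuleCat.ofHom p = 𝟙 _ := by
    rw [← ModuleCat.ofHom_comp, hp]; rfl
  have h2 := (Abelian.Ext.mk₀_comp_mk₀_assoc (ModuleCat.ofHom i) (ModuleCat.ofHom p) e)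
  rw [h1, Abelian.Ext.mk₀_id_comp, h.eq_zero (Abelian.Ext.comp _ e _), Abelian.Ext.comp_zero] at h2
  exact h2.symm

lemma EV.retract_right (i : A →ₗ[R] B) (p : B →ₗ[R] A) (hp : p ∘ₗ i = LinearMap.id) {n : ℕ}
    (h : EV R X B n) : EV R X A n := EV.mk' fun e => by
  have h1 : ModuleCat.ofHom i ≫ ModuleCat.ofHom p = 𝟙 _ := by
    rw [← ModuleCat.ofHom_comp, hp]; rfl
  rw [← e.comp_mk₀_id, ← h1, ← Abelian.Ext.mk₀_comp_mk₀,
    ← Abelian.Ext.comp_assoc_of_second_deg_zero, h.eq_zero (Abelian.Ext.comp e _ _),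
    Abelian.Ext.zero_comp]

lemma EV.congr_left (e : A ≃ₗ[R] B) {n : ℕ} (h : EV R A Y n) : EV R B Y n :=
  h.retract_left e.symm.toLinearMap e.toLinearMap (by ext; simp)

lemma EV.congr_right (e : A ≃ₗ[R] B) {n : ℕ} (h : EV R X A n) : EV R X B n :=
  h.retract_right e.symm.toLinearMap e.toLinearMap (by ext; simp)

/-- an element killing `X` and acting bijectively on `Y` forces vanishing -/
lemma EV.of_bij (r : R) (hr : ∀ x : X, r • x = 0) (hb : Function.Bijective (fun y : Y => r • y))
    (n : ℕ) : EV R X Y n := EV.mk' fun e => by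
  let l : Y ≃ₗ[R] Y := LinearEquiv.ofBijective (LinearMap.lsmul R Y r) hb
  have h1 : (r • 𝟙 (ModuleCat.of R Y)) ≫ ModuleCat.ofHom l.symm.toLinearMap = 𝟙 _ := by
    ext y
    exact l.symm_apply_apply y
  have h0 : r • 𝟙 (ModuleCat.of R X) = 0 := by
    ext x; exact hr x
  have h2 : r • e = 0 := by
    have : r • e = (Abelian.Ext.mk₀ (r • 𝟙 (ModuleCat.of R X))).comp e (zero_add n) := by
      simp [Abelian.Ext.mk₀_smul]
    rw [this, h0]; simp
  have h3 : e.comp (Abelian.Ext.mk₀ (r • 𝟙 (ModuleCat.of R Y))) (add_zero n) = r • e := by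
    simp [Abelian.Ext.mk₀_smul]
  rw [← e.comp_mk₀_id, ← h1, ← Abelian.Ext.mk₀_comp_mk₀,
    ← Abelian.Ext.comp_assoc_of_second_deg_zero, h3, h2,
    Abelian.Ext.zero_comp]

lemma pd_iff (n : ℕ) : HasProjectiveDimensionLT (ModuleCat.of R X) n ↔
    ∀ (Y : ModuleCat R) (i : ℕ), n ≤ i → EV R X Y i := by
  rw [hasProjectiveDimensionLT_iff]
  exact ⟨fun h Y i hi => EV.mk' fun e => h i hi e, fun h i hi Y e => (h Y i hi).eq_zero e⟩

end EVsec

open CategoryTheory IsLocalRing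
section bridge
variable {R : Type} [CommRing R]

def Fac {X : ModuleCat.{0} R} (P : ProjectiveResolution X) (Y : ModuleCat.{0} R) (i : ℕ) : Prop :=
  ∀ f : P.complex.X (i+1) ⟶ Y, P.complex.d (i+2) (i+1) ≫ f = 0 → ∃ g, P.complex.d (i+1) i ≫ g = f

lemma EV_iff_fac {X Y : Type} [AddCommGroup X] [Module R X] [AddCommGroup Y] [Module R Y]
    (P : ProjectiveResolution (ModuleCat.of R X)) (i : ℕ) :
    EV R X Y (i+1) ↔ Fac P (ModuleCat.of R Y) i := by
  constructor
  · intro h f hf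
    exact (P.extMk_eq_zero_iff f (i+2) rfl hf i rfl).1 (h.eq_zero _)
  · intro h
    refine EV.mk' fun e => ?_
    obtain ⟨f, hf, rfl⟩ := P.extMk_surjective e (i+2) rfl
    exact (P.extMk_eq_zero_iff f (i+2) rfl hf i rfl).2 (h f hf)

lemma modCat_subsingleton_iff {M : ModuleCat.{0} R} : Subsingleton M ↔ Limits.IsZero M :=
  ⟨fun _ => ModuleCat.isZero_of_subsingleton M, fun h => ModuleCat.subsingleton_of_isZero h⟩

lemma ext_bridge {X Y : Type} [AddCommGroup X] [Module R X] [AddCommGroup Y] [Module R Y] (i : ℕ) :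
    ExtVanish R X Y (i+1) ↔ EV R X Y (i+1) := by
  let P := ProjectiveResolution.of (ModuleCat.of R X)
  rw [EV_iff_fac P, ExtVanish, modCat_subsingleton_iff,
    (P.isoExt (R := R) (i+1) (ModuleCat.of R Y)).isZero_iff,
    ← HomologicalComplex.exactAt_iff_isZero_homology,
    HomologicalComplex.exactAt_iff' _ i (i+1) (i+2) (by simp) (by simp),
    ShortComplex.moduleCat_exact_iff]
  rfl

section dual
variable {A B C : Type} [AddCommGroup A] [Module R A] [AddCommGroup B] [Module R B]
  [AddCommGroup C] [Module R C]

lemma char_fac {f : A →ₗ[R] B} {g : B →ₗ[R] C} (h : Function.Exact f g)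
    (c : CharacterModule B) (hc : ∀ a, c (f a) = 0) : ∃ c' : CharacterModule C, ∀ b, c' (g b) = c b := by
  let g' : (B ⧸ LinearMap.ker g) →ₗ[R] C := (LinearMap.ker g).liftQ g le_rfl
  have hg' : Function.Injective g' := by
    rw [← LinearMap.ker_eq_bot]; exact Submodule.ker_liftQ_eq_bot' _ _ rfl
  have hk : ∀ b ∈ (LinearMap.ker g).toAddSubgroup, c b = 0 := by
    intro b hb
    obtain ⟨a, rfl⟩ := (h b).1 hb
    exact hc a
  let c1 : CharacterModule (B ⧸ LinearMap.ker g) :=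
    QuotientAddGroup.lift (LinearMap.ker g).toAddSubgroup (c : B →+ AddCircle (1:ℚ)) hk
  obtain ⟨c', hc'⟩ := CharacterModule.dual_surjective_of_injective g' hg' c1
  refine ⟨c', fun b => ?_⟩
  have := DFunLike.congr_fun hc' (Submodule.Quotient.mk b)
  exact this

lemma char_exact_conv {f : A →ₗ[R] B} {g : B →ₗ[R] C}
    (h : ∀ c : CharacterModule B, (∀ a, c (f a) = 0) → ∃ c' : CharacterModule C, ∀ b, c' (g b) = c b)
    (b : B) (hb : g b = 0) : ∃ a, f a = b := by
  by_contra hcon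
  have h0 : (LinearMap.range f).mkQ b ≠ 0 := by
    intro h0
    exact hcon ((Submodule.Quotient.mk_eq_zero _).1 h0)
  obtain ⟨c, hc⟩ := CharacterModule.exists_character_apply_ne_zero_of_ne_zero h0
  obtain ⟨c', hc'⟩ := h (CharacterModule.dual (LinearMap.range f).mkQ c) (fun a => by
    have : (LinearMap.range f).mkQ (f a) = 0 := (Submodule.Quotient.mk_eq_zero _).2 ⟨a, rfl⟩
    change c ((LinearMap.range f).mkQ (f a)) = 0
    rw [this, map_zero])
  apply hc
  have := hc' b
  rw [hb, map_zero] at this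
  exact this.symm
end dual

lemma tor_bridge {X Y : Type} [AddCommGroup X] [Module R X] [AddCommGroup Y] [Module R Y] (i : ℕ) :
    TorVanish R X Y (i+1) ↔ EV R Y (CharacterModule X) (i+1) := by
  let P := ProjectiveResolution.of (ModuleCat.of R Y)
  let d1 : P.complex.X (i+1) →ₗ[R] P.complex.X i := (P.complex.d (i+1) i).hom
  let d2 : P.complex.X (i+2) →ₗ[R] P.complex.X (i+1) := (P.complex.d (i+2) (i+1)).hom
  have hd : d1 ∘ₗ d2 = 0 := by
    have := P.complex.d_comp_d (i+2) (i+1) i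
    exact congrArg ModuleCat.Hom.hom this
  rw [EV_iff_fac P, TorVanish, modCat_subsingleton_iff]
  have e : (((Tor (ModuleCat R) (i+1)).obj (ModuleCat.of R X)).obj (ModuleCat.of R Y)) ≅ _ :=
    P.isoLeftDerivedObj ((MonoidalCategory.tensoringLeft (ModuleCat R)).obj (ModuleCat.of R X)) (i+1)
  rw [e.isZero_iff]
  change Limits.IsZero (HomologicalComplex.homology _ (i+1)) ↔ _
  rw [← HomologicalComplex.exactAt_iff_isZero_homology,
    HomologicalComplex.exactAt_iff' _ (i+2) (i+1) i (by simp) (by simp),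
    ShortComplex.moduleCat_exact_iff]
  change (∀ x : TensorProduct R X (P.complex.X (i+1)), d1.lTensor X x = 0 →
    ∃ y : TensorProduct R X (P.complex.X (i+2)), d2.lTensor X y = x) ↔ _
  constructor
  · intro h f hf
    have hf' : ∀ y, f.hom (d2 y) = 0 := fun y => by
      have := congrArg (fun t => ModuleCat.Hom.hom t y) hf
      exact this
    have hex : Function.Exact (d2.rTensor X) (d1.rTensor X) := by
      intro x
      constructor
      · intro hx
        obtain ⟨y, hy⟩ := h (TensorProduct.comm R _ _ x) (by
          rw [← LinearMap.comm_comp_rTensor_comp_comm_eq]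
          simp [hx])
        refine ⟨(TensorProduct.comm R _ _).symm y, ?_⟩
        apply (TensorProduct.comm R _ _).injective
        rw [← hy, ← LinearMap.comm_comp_rTensor_comp_comm_eq]
        simp
      · rintro ⟨y, rfl⟩
        rw [← LinearMap.comp_apply, ← LinearMap.rTensor_comp, hd]; simp
    obtain ⟨c', hc'⟩ := char_fac hex (CharacterModule.homEquiv f.hom) (fun a => by
      induction a using TensorProduct.induction_on with
      | zero => simp
      | add x y hx hy => rw [map_add, map_add, hx, hy, add_zero]
      | tmul x y =>
        change (f.hom (d2 x)) y = 0
        rw [hf']; rfl)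
    refine ⟨ModuleCat.ofHom (CharacterModule.homEquiv.symm c'), ?_⟩
    ext p y
    exact hc' (p ⊗ₜ y)
  · intro h
    have key := char_exact_conv (f := d2.rTensor X) (g := d1.rTensor X) (fun c hc => by
      obtain ⟨g, hg⟩ := h (ModuleCat.ofHom (CharacterModule.homEquiv.symm c)) (by
        ext p y
        exact hc (p ⊗ₜ y))
      refine ⟨CharacterModule.homEquiv g.hom, fun b => ?_⟩
      induction b using TensorProduct.induction_on with
      | zero => simp
      | add x y hx hy => rw [map_add, map_add, hx, hy, map_add]
      | tmul x y =>
        have := congrArg (fun t => ModuleCat.Hom.hom t x) hg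
        exact DFunLike.congr_fun this y)
    intro x hx
    obtain ⟨y, hy⟩ := key ((TensorProduct.comm R _ _).symm x) (by
      apply (TensorProduct.comm R _ _).injective
      rw [map_zero, ← hx, ← LinearMap.comm_comp_rTensor_comp_comm_eq]
      simp)
    refine ⟨TensorProduct.comm R _ _ y, ?_⟩
    rw [← LinearMap.comm_comp_rTensor_comp_comm_eq]
    simp [hy]

end bridge

open CategoryTheory IsLocalRing RingTheory.Sequence
section L3
variable {R : Type} [CommRing R]

lemma EV.quot_left {M N : Type} [AddCommGroup M] [Module R M] [AddCommGroup N] [Module R N]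
    {x : R} (hx : IsSMulRegular M x) {i : ℕ} (h1 : EV R M N i) (h2 : EV R M N (i+1)) :
    EV R (QuotSMulTop x M) N (i+1) :=
  EV.con3 (LinearMap.exact_lsmul_mkQ_smul_top M x) hx (Submodule.mkQ_surjective _) h1 h2

lemma EV.quot_right {M N : Type} [AddCommGroup M] [Module R M] [AddCommGroup N] [Module R N]
    {x : R} (hx : IsSMulRegular N x) {i : ℕ} (h1 : EV R M N i) (h2 : EV R M N (i+1)) :
    EV R M (QuotSMulTop x N) i :=
  EV.cov3 (LinearMap.exact_lsmul_mkQ_smul_top N x) hx (Submodule.mkQ_surjective _) h1 h2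

lemma dual_exact {A B C : Type} [AddCommGroup A] [Module R A] [AddCommGroup B] [Module R B]
    [AddCommGroup C] [Module R C] {f : A →ₗ[R] B} {g : B →ₗ[R] C} (h : Function.Exact f g) :
    Function.Exact (CharacterModule.dual g) (CharacterModule.dual f) := by
  intro c
  constructor
  · intro hc
    obtain ⟨c', hc'⟩ := char_fac h c (fun a => DFunLike.congr_fun hc a)
    exact ⟨c', DFunLike.ext _ _ hc'⟩
  · rintro ⟨c', rfl⟩
    refine DFunLike.ext _ _ fun a => ?_
    change c' (g (f a)) = 0
    rw [h.apply_apply_eq_zero, map_zero]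

lemma EV.quot_char {M N : Type} [AddCommGroup M] [Module R M] [AddCommGroup N] [Module R N]
    {x : R} (hx : IsSMulRegular M x) {i : ℕ} (h1 : EV R N (CharacterModule M) i)
    (h2 : EV R N (CharacterModule M) (i+1)) :
    EV R N (CharacterModule (QuotSMulTop x M)) (i+1) :=
  EV.cov1 (dual_exact (LinearMap.exact_lsmul_mkQ_smul_top M x))
    (CharacterModule.dual_injective_of_surjective _ (Submodule.mkQ_surjective _))
    (CharacterModule.dual_surjective_of_injective _ hx) h1 h2

noncomputable def quotNilEquiv (M : Type) [AddCommGroup M] [Module R M] :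
    (M ⧸ (Ideal.ofList ([] : List R) • ⊤ : Submodule R M)) ≃ₗ[R] M :=
  Submodule.quotEquivOfEqBot _ (by simp)

lemma EV.list_left {N : Type} [AddCommGroup N] [Module R N] (rs : List R) :
    ∀ (M : Type) [AddCommGroup M] [Module R M] (n : ℕ) (_ : IsWeaklyRegular M rs)
    (_ : ∀ i, n ≤ i → i ≤ n + rs.length → EV R M N i),
    EV R (M ⧸ (Ideal.ofList rs • ⊤ : Submodule R M)) N (n + rs.length) := by
  induction rs with
  | nil => intro M _ _ n hw h; exact (h n le_rfl le_rfl).congr_left (quotNilEquiv M).symm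
  | cons x rs ih =>
    intro M _ _ n hw h
    rw [isWeaklyRegular_cons_iff] at hw
    have := ih (QuotSMulTop x M) (n+1) hw.2 (fun i hi hi2 => by
      obtain ⟨i, rfl⟩ : ∃ j, i = j + 1 := ⟨i-1, by omega⟩
      exact EV.quot_left hw.1 (h i (by omega) (by simp; omega)) (h (i+1) (by omega) (by simp; omega)))
    have := this.congr_left (Submodule.quotOfListConsSMulTopEquivQuotSMulTopInner M x rs).symm
    convert this using 1
    simp; omega

lemma EV.list_right {M : Type} [AddCommGroup M] [Module R M] (rs : List R) :
    ∀ (N : Type) [AddCommGroup N] [Module R N] (n : ℕ) (_ : IsWeaklyRegular N rs)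
    (_ : ∀ i, n ≤ i → i ≤ n + rs.length → EV R M N i),
    EV R M (N ⧸ (Ideal.ofList rs • ⊤ : Submodule R N)) n := by
  induction rs with
  | nil => intro N _ _ n hw h; exact (h n le_rfl le_rfl).congr_right (quotNilEquiv N).symm
  | cons x rs ih =>
    intro N _ _ n hw h
    rw [isWeaklyRegular_cons_iff] at hw
    have := ih (QuotSMulTop x N) n hw.2 (fun i hi hi2 =>
      EV.quot_right hw.1 (h i (by omega) (by simp; omega)) (h (i+1) (by omega) (by simp; omega)))
    exact this.congr_right (Submodule.quotOfListConsSMulTopEquivQuotSMulTopInner N x rs).symm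

lemma EV.list_char {N : Type} [AddCommGroup N] [Module R N] (rs : List R) :
    ∀ (M : Type) [AddCommGroup M] [Module R M] (n : ℕ) (_ : IsWeaklyRegular M rs)
    (_ : ∀ i, n ≤ i → i ≤ n + rs.length → EV R N (CharacterModule M) i),
    EV R N (CharacterModule (M ⧸ (Ideal.ofList rs • ⊤ : Submodule R M))) (n + rs.length) := by
  induction rs with
  | nil =>
    intro M _ _ n hw h
    exact (h n le_rfl le_rfl).congr_right (CharacterModule.congr (quotNilEquiv M).symm)
  | cons x rs ih =>
    intro M _ _ n hw h
    rw [isWeaklyRegular_cons_iff] at hw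
    have := ih (QuotSMulTop x M) (n+1) hw.2 (fun i hi hi2 => by
      obtain ⟨i, rfl⟩ : ∃ j, i = j + 1 := ⟨i-1, by omega⟩
      exact EV.quot_char hw.1 (h i (by omega) (by simp; omega)) (h (i+1) (by omega) (by simp; omega)))
    have := this.congr_right
      (CharacterModule.congr (Submodule.quotOfListConsSMulTopEquivQuotSMulTopInner M x rs).symm)
    convert this using 1
    simp; omega
end L3

section L4
variable {R : Type} [CommRing R] [IsLocalRing R]

/-- residue field as a quotient module -/
abbrev kk (R : Type) [CommRing R] [IsLocalRing R] : Type := R ⧸ maximalIdeal R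

lemma exists_retract_kk (V : Type) [AddCommGroup V] [Module R V] [Nontrivial V]
    (hV : ∀ r ∈ maximalIdeal R, ∀ v : V, r • v = 0) :
    ∃ (i : kk R →ₗ[R] V) (p : V →ₗ[R] kk R), p ∘ₗ i = LinearMap.id := by
  have ht : Module.IsTorsionBySet R V (maximalIdeal R) := fun v r => hV r.1 r.2 v
  let := ht.module
  have : IsScalarTower R (R ⧸ maximalIdeal R) V := ht.isScalarTower
  let : Field (kk R) := Ideal.Quotient.field _
  obtain ⟨v, hv⟩ := exists_ne (0 : V)
  let i : kk R →ₗ[kk R] V := LinearMap.toSpanSingleton (kk R) V v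
  have hi : LinearMap.ker i = ⊥ := LinearMap.ker_toSpanSingleton (kk R) hv
  obtain ⟨p, hp⟩ := i.exists_leftInverse_of_injective hi
  refine ⟨i.restrictScalars R, p.restrictScalars R, ?_⟩
  ext
  exact congrArg (fun f => f 1) hp

lemma exists_map_kk (K : Type) [AddCommGroup K] [Module R K] [Module.Finite R K] [Nontrivial K] :
    Nontrivial (K ⧸ (maximalIdeal R • ⊤ : Submodule R K)) := by
  apply Submodule.Quotient.nontrivial_iff.2
  refine (Submodule.top_ne_ideal_smul_of_le_jacobson_annihilator ?_).symm
  exact IsLocalRing.maximalIdeal_le_jacobson _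

lemma quot_m_kill (K : Type) [AddCommGroup K] [Module R K] :
    ∀ r ∈ maximalIdeal R, ∀ v : (K ⧸ (maximalIdeal R • ⊤ : Submodule R K)), r • v = 0 := by
  intro r hr v
  obtain ⟨v, rfl⟩ := Submodule.Quotient.mk_surjective _ v
  rw [← Submodule.Quotient.mk_smul, Submodule.Quotient.mk_eq_zero]
  exact Submodule.smul_mem_smul hr trivial

lemma subsingleton_of_hom_kk (K : Type) [AddCommGroup K] [Module R K] [Module.Finite R K]
    (h : ∀ φ : K →ₗ[R] kk R, φ = 0) : Subsingleton K := by
  by_contra hK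
  rw [not_subsingleton_iff_nontrivial] at hK
  have := exists_map_kk (R := R) K
  obtain ⟨i, p, hp⟩ := exists_retract_kk _ (quot_m_kill (R := R) K)
  have := h (p ∘ₗ Submodule.mkQ _)
  have hp0 : p = 0 := by
    ext x
    exact congrArg (fun f => f x) this
  rw [hp0] at hp
  have := congrArg (fun f => f 1) hp
  simp at this

lemma subsingleton_of_hom_kk_char (K : Type) [AddCommGroup K] [Module R K] [Module.Finite R K]
    (h : ∀ φ : kk R →ₗ[R] CharacterModule K, φ = 0) : Subsingleton K := by
  by_contra hK
  rw [not_subsingleton_iff_nontrivial] at hK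
  have := exists_map_kk (R := R) K
  let V := K ⧸ (maximalIdeal R • ⊤ : Submodule R K)
  have hV : Nontrivial (CharacterModule V) := by
    obtain ⟨v, hv⟩ := exists_ne (0 : V)
    obtain ⟨c, hc⟩ := CharacterModule.exists_character_apply_ne_zero_of_ne_zero hv
    exact ⟨c, 0, fun h => hc (by rw [h]; rfl)⟩
  obtain ⟨i, p, hp⟩ := exists_retract_kk (R := R) (CharacterModule V) (fun r hr c => by
    refine DFunLike.ext _ _ fun v => ?_
    change c (r • v) = 0
    rw [quot_m_kill K r hr v, map_zero])
  have := h (CharacterModule.dual (Submodule.mkQ _) ∘ₗ i)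
  have hi : i = 0 := by
    apply LinearMap.ext
    intro x
    apply CharacterModule.dual_injective_of_surjective _
      (Submodule.mkQ_surjective (maximalIdeal R • ⊤ : Submodule R K))
    rw [LinearMap.zero_apply, map_zero]
    exact congrArg (fun f => f x) this
  rw [hi] at hp
  have := congrArg (fun f => f 1) hp
  simp at this

lemma min_cover (M : Type) [AddCommGroup M] [Module R M] [Module.Finite R M] :
    ∃ (n : ℕ) (g : (Fin n → R) →ₗ[R] M), Function.Surjective g ∧
      ∀ x, g x = 0 → ∀ j, x j ∈ maximalIdeal R := by
  classical
  have hex : ∃ n, ∃ s : Fin n → M, Submodule.span R (Set.range s) = ⊤ := Module.Finite.exists_fin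
  obtain ⟨n, ⟨s, hs⟩, hmin⟩ : ∃ n, (∃ s : Fin n → M, Submodule.span R (Set.range s) = ⊤) ∧
      ∀ m < n, ¬ ∃ s : Fin m → M, Submodule.span R (Set.range s) = ⊤ :=
    ⟨Nat.find hex, Nat.find_spec hex, fun m hm => Nat.find_min hex hm⟩
  refine ⟨n, Fintype.linearCombination R s, ?_, ?_⟩
  · rw [← LinearMap.range_eq_top, Fintype.range_linearCombination, hs]
  · intro x hx j
    by_contra hj
    have hu : IsUnit (x j) := by
      by_contra h; exact hj ((mem_maximalIdeal _).2 h)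
    obtain ⟨u, hu⟩ := hu
    obtain ⟨m, hm⟩ : ∃ m, n = m + 1 := ⟨n - 1, by have := j.2; omega⟩
    have : m < n := by omega
    refine hmin m this ?_
    subst hm
    refine ⟨fun i => s (j.succAbove i), ?_⟩
    rw [eq_top_iff, ← hs, Submodule.span_le]
    rintro _ ⟨i, rfl⟩
    by_cases hij : i = j
    · subst hij
      rw [Fintype.linearCombination_apply, Fin.sum_univ_succAbove _ i, ← hu] at hx
      have h2 : s i = - ((↑u⁻¹ : R) • ∑ l, x (i.succAbove l) • s (i.succAbove l)) := by
        rw [← add_eq_zero_iff_eq_neg]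
        have := congrArg (fun t => (↑u⁻¹ : R) • t) hx
        simpa [smul_add, smul_smul] using this
      rw [SetLike.mem_coe, h2]
      exact Submodule.neg_mem _ (Submodule.smul_mem _ _ (Submodule.sum_mem _ fun l _ =>
        Submodule.smul_mem _ _ (Submodule.subset_span ⟨l, rfl⟩)))
    · obtain ⟨l, rfl⟩ := Fin.exists_succAbove_eq hij
      exact Submodule.subset_span ⟨l, rfl⟩
end L4

open CategoryTheory IsLocalRing RingTheory.Sequence
section L5
variable {R : Type} [CommRing R]

def PDLT (R : Type) [CommRing R] (X : Type) [AddCommGroup X] [Module R X] (n : ℕ) : Prop :=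
  ∀ (Y : Type) [AddCommGroup Y] [Module R Y] (i : ℕ), n ≤ i → EV R X Y i

lemma EV.of_subsingleton_left {X Y : Type} [AddCommGroup X] [Module R X] [AddCommGroup Y]
    [Module R Y] [Subsingleton X] (n : ℕ) : EV R X Y n := by
  cases n with
  | zero => rw [EV.zero_iff]; infer_instance
  | succ n => have : Module.Free R X := inferInstance
              exact EV.of_proj n

lemma PDLT.of_subsingleton {X : Type} [AddCommGroup X] [Module R X] [Subsingleton X] (n : ℕ) :
    PDLT R X n := fun _ _ _ i _ => EV.of_subsingleton_left i

lemma PDLT.of_proj {X : Type} [AddCommGroup X] [Module R X] [Module.Projective R X] :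
    PDLT R X 1 := fun _ _ _ i hi => by
  obtain ⟨j, rfl⟩ : ∃ j, i = j+1 := ⟨i-1, by omega⟩
  exact EV.of_proj j

lemma PDLT.mono {X : Type} [AddCommGroup X] [Module R X] {n m : ℕ} (h : PDLT R X n) (hm : n ≤ m) :
    PDLT R X m := fun Y _ _ i hi => h Y i (hm.trans hi)

lemma PDLT.congr {X X' : Type} [AddCommGroup X] [Module R X] [AddCommGroup X'] [Module R X']
    (e : X ≃ₗ[R] X') {n : ℕ} (h : PDLT R X n) : PDLT R X' n :=
  fun Y _ _ i hi => (h Y i hi).congr_left e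

lemma ker_exact {A B : Type} [AddCommGroup A] [Module R A] [AddCommGroup B] [Module R B]
    (g : A →ₗ[R] B) : Function.Exact (LinearMap.ker g).subtype g := by
  intro x; simp

lemma PDLT.succ {A B C : Type} [AddCommGroup A] [Module R A] [AddCommGroup B] [Module R B]
    [AddCommGroup C] [Module R C] {f : A →ₗ[R] B} {g : B →ₗ[R] C} (h : Function.Exact f g)
    (hf : Function.Injective f) (hg : Function.Surjective g) {n : ℕ} (hA : PDLT R A n)
    (hB : PDLT R B (n+1)) : PDLT R C (n+1) := fun Y _ _ i hi => by
  obtain ⟨j, rfl⟩ : ∃ j, i = j+1 := ⟨i-1, by omega⟩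
  exact EV.con3 h hf hg (hA Y j (by omega)) (hB Y (j+1) hi)

lemma PDLT.of_min {M F : Type} [AddCommGroup M] [Module R M] [AddCommGroup F] [Module R F]
    [Module.Projective R F] (g : F →ₗ[R] M) (hg : Function.Surjective g)
    (h : Subsingleton (LinearMap.ker g)) : PDLT R M 1 := by
  have : Function.Injective g := by
    rw [← LinearMap.ker_eq_bot, ← Submodule.subsingleton_iff_eq_bot]; exact h
  exact PDLT.of_proj.congr (LinearEquiv.ofBijective g ⟨this, hg⟩)

variable [IsLocalRing R] [IsNoetherianRing R]

lemma kk_smul {r : R} (hr : r ∈ maximalIdeal R) (x : kk R) : r • x = 0 := by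
  obtain ⟨x, rfl⟩ := Ideal.Quotient.mk_surjective x
  exact Ideal.Quotient.eq_zero_iff_mem.2 (Ideal.mul_mem_right x _ hr)

lemma L5 (n : ℕ) : ∀ (M : Type) [AddCommGroup M] [Module R M] [Module.Finite R M]
    (_ : EV R M (kk R) n), PDLT R M n := by
  induction n with
  | zero =>
    intro M _ _ _ h
    rw [EV.zero_iff] at h
    have := subsingleton_of_hom_kk (R := R) M (fun φ => Subsingleton.elim _ _)
    exact PDLT.of_subsingleton 0
  | succ n ih =>
    intro M _ _ _ h
    obtain ⟨d, g, hg, hmin⟩ := min_cover (R := R) M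
    have hex := ker_exact g
    cases n with
    | zero =>
      refine PDLT.of_min g hg (subsingleton_of_hom_kk (R := R) _ fun φ => ?_)
      obtain ⟨ψ, rfl⟩ := EV.extend hex (Submodule.subtype_injective _) hg h φ
      ext ⟨x, hx⟩
      have : x = ∑ j, x j • Pi.single j (1 : R) := pi_eq_sum_univ' x
      change ψ x = 0
      rw [this, map_sum]
      refine Finset.sum_eq_zero fun j _ => ?_
      rw [map_smul, kk_smul (hmin x hx j)]
    | succ n =>
      have h1 := EV.con1 hex (Submodule.subtype_injective _) hg (EV.of_proj n) h
      exact PDLT.succ hex (Submodule.subtype_injective _) hg (ih _ h1) (PDLT.of_proj.mono (by omega))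

lemma L8 (n : ℕ) : ∀ (M : Type) [AddCommGroup M] [Module R M] [Module.Finite R M]
    (_ : EV R (kk R) (CharacterModule M) (n+1)), PDLT R M (n+1) := by
  induction n with
  | zero =>
    intro M _ _ _ h
    obtain ⟨d, g, hg, hmin⟩ := min_cover (R := R) M
    have hex := ker_exact g
    refine PDLT.of_min g hg (subsingleton_of_hom_kk_char (R := R) _ fun φ => ?_)
    obtain ⟨ψ, rfl⟩ := EV.lift (dual_exact hex)
      (CharacterModule.dual_injective_of_surjective _ hg)
      (CharacterModule.dual_surjective_of_injective _ (Submodule.subtype_injective _)) h φ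
    apply LinearMap.ext
    intro t
    refine DFunLike.ext _ _ fun ⟨x, hx⟩ => ?_
    have : x = ∑ j, x j • Pi.single j (1 : R) := pi_eq_sum_univ' x
    change ψ t x = 0
    rw [this, map_sum]
    refine Finset.sum_eq_zero fun j _ => ?_
    have := congrArg (fun c => c (Pi.single j (1 : R))) ((ψ.map_smul (x j) t).symm.trans
      (by rw [kk_smul (hmin x hx j), map_zero]))
    exact this
  | succ n ih =>
    intro M _ _ _ h
    obtain ⟨d, g, hg, hmin⟩ := min_cover (R := R) M
    have hex := ker_exact g
    have hinj : Module.Injective R (CharacterModule (Fin d → R)) :=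
      Module.Flat.iff_characterModule_injective.1 inferInstance
    have h1 := EV.cov3 (dual_exact hex)
      (CharacterModule.dual_injective_of_surjective _ hg)
      (CharacterModule.dual_surjective_of_injective _ (Submodule.subtype_injective _))
      (EV.of_inj hinj n) h
    exact PDLT.succ hex (Submodule.subtype_injective _) hg (ih _ h1) (PDLT.of_proj.mono (by omega))
end L5

open CategoryTheory IsLocalRing RingTheory.Sequence
section L9
variable {R : Type} [CommRing R]

lemma PDLT.projective {M : Type} [AddCommGroup M] [Module R M]
    (h : PDLT R M 1) : Module.Projective R M := by
  let g : (M →₀ R) →ₗ[R] M := Finsupp.linearCombination R id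
  have hg : Function.Surjective g := Finsupp.linearCombination_id_surjective R M
  obtain ⟨ψ, hψ⟩ := EV.lift (ker_exact g) (Submodule.subtype_injective _) hg
    (h _ 1 le_rfl) LinearMap.id
  exact Module.Projective.of_split ψ g hψ

lemma PDLT.ker {M F : Type} [AddCommGroup M] [Module R M] [AddCommGroup F] [Module R F]
    [Module.Projective R F] (g : F →ₗ[R] M) (hg : Function.Surjective g) {n : ℕ}
    (h : PDLT R M (n+2)) : PDLT R (LinearMap.ker g) (n+1) := fun Y _ _ i hi => by
  obtain ⟨j, rfl⟩ : ∃ j, i = j+1 := ⟨i-1, by omega⟩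
  exact EV.con1 (ker_exact g) (Submodule.subtype_injective _) hg (EV.of_proj _) (h Y _ (by omega))

lemma quot_projective {M : Type} [AddCommGroup M] [Module R M] [Module.Projective R M] (x : R) :
    Module.Projective (R ⧸ Ideal.span {x}) (QuotSMulTop x M) := by
  let e : QuotSMulTop x M ≃ₗ[R] TensorProduct R (R ⧸ Ideal.span {x}) M :=
    QuotSMulTop.equivQuotTensor x M
  have hs : Function.Surjective (algebraMap R (R ⧸ Ideal.span {x})) := Ideal.Quotient.mk_surjective
  exact Module.Projective.of_equiv (e.extendScalarsOfSurjective hs).symm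

lemma quot_exact {A B C : Type} [AddCommGroup A] [Module R A] [AddCommGroup B] [Module R B]
    [AddCommGroup C] [Module R C] {f : A →ₗ[R] B} {g : B →ₗ[R] C} (x : R) (h : Function.Exact f g)
    (hf : Function.Injective f) (hg : Function.Surjective g) (hx : IsSMulRegular C x) :
    Function.Exact (QuotSMulTop.map x f) (QuotSMulTop.map x g) ∧
      Function.Injective (QuotSMulTop.map x f) := by
  refine ⟨QuotSMulTop.map_exact x h hg, ?_⟩
  have h0 : Function.Exact (0 : Unit →ₗ[R] A) f := by
    intro y
    rw [map_eq_zero_iff f hf]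
    simp [eq_comm]
  have := QuotSMulTop.map_first_exact_on_four_term_exact_of_isSMulRegular_last h0 h hx
  rw [injective_iff_map_eq_zero]
  intro a ha
  obtain ⟨b, hb⟩ := (this a).1 ha
  rw [← hb]; simp

lemma PDLT.quot_step {A B C : Type} [AddCommGroup A] [Module R A] [AddCommGroup B] [Module R B]
    [AddCommGroup C] [Module R C] {f : A →ₗ[R] B} {g : B →ₗ[R] C} (x : R) (h : Function.Exact f g)
    (hf : Function.Injective f) (hg : Function.Surjective g) (hx : IsSMulRegular C x)
    [Module.Projective R B] {n : ℕ} (hA : PDLT (R ⧸ Ideal.span {x}) (QuotSMulTop x A) (n+1)) :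
    PDLT (R ⧸ Ideal.span {x}) (QuotSMulTop x C) (n+2) := by
  have hs : Function.Surjective (algebraMap R (R ⧸ Ideal.span {x})) := Ideal.Quotient.mk_surjective
  obtain ⟨hex, hinj⟩ := quot_exact x h hf hg hx
  have hproj : Module.Projective (R ⧸ Ideal.span {x}) (QuotSMulTop x B) := quot_projective x
  exact PDLT.succ (f := (QuotSMulTop.map x f).extendScalarsOfSurjective hs)
      (g := (QuotSMulTop.map x g).extendScalarsOfSurjective hs) hex hinj
      (QuotSMulTop.map_surjective x hg) hA (PDLT.of_proj.mono (by omega))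

lemma exists_cover (M : Type) [AddCommGroup M] [Module R M] :
    ∃ (F : Type) (_ : AddCommGroup F) (_ : Module R F) (g : F →ₗ[R] M), Function.Surjective g ∧
      Module.Projective R F ∧ ∀ x : R, IsSMulRegular R x → IsSMulRegular F x := by
  refine ⟨M →₀ R, inferInstance, inferInstance, Finsupp.linearCombination R id,
    Finsupp.linearCombination_id_surjective R M, inferInstance, fun x hx a b hab => ?_⟩
  ext i
  exact hx (DFunLike.congr_fun hab i)

lemma PDLT.quot (x : R) (hx : IsSMulRegular R x) (n : ℕ) :
    ∀ (M : Type) [AddCommGroup M] [Module R M] (_ : IsSMulRegular M x)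
    (_ : PDLT R M (n+1)), PDLT (R ⧸ Ideal.span {x}) (QuotSMulTop x M) (n+1) := by
  have hs : Function.Surjective (algebraMap R (R ⧸ Ideal.span {x})) := Ideal.Quotient.mk_surjective
  induction n with
  | zero =>
    intro M _ _ _ h
    have := h.projective
    have := quot_projective (M := M) x
    exact PDLT.of_proj
  | succ n ih =>
    intro M _ _ hxM h
    obtain ⟨F, _, _, g, hg, _, hF⟩ := exists_cover (R := R) M
    have hK : IsSMulRegular (LinearMap.ker g) x :=
      (hF x hx).of_injective (LinearMap.ker g).subtype (Submodule.subtype_injective _)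
    have h1 := ih _ hK (h.ker g hg)
    exact PDLT.quot_step x (ker_exact g) (Submodule.subtype_injective _) hg hxM h1

variable [IsLocalRing R] [IsNoetherianRing R]

lemma proj_of_socle (s : R) (hs0 : s ≠ 0) (hs : ∀ r ∈ maximalIdeal R, s * r = 0) (n : ℕ) :
    ∀ (M : Type) [AddCommGroup M] [Module R M] [Module.Finite R M]
    (_ : PDLT R M (n+1)), Module.Projective R M := by
  induction n with
  | zero => intro M _ _ _ h; exact h.projective
  | succ n ih =>
    intro M _ _ _ h
    obtain ⟨d, g, hg, hmin⟩ := min_cover (R := R) M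
    have := ih _ (h.ker g hg)
    have : Module.Free R (LinearMap.ker g) := Module.free_of_flat_of_isLocalRing
    have hsub : Subsingleton (LinearMap.ker g) := by
      by_contra hK
      rw [not_subsingleton_iff_nontrivial] at hK
      let b := Module.Free.chooseBasis R (LinearMap.ker g)
      obtain ⟨j⟩ := b.index_nonempty
      have hb : s • b j = 0 := by
        apply Subtype.ext
        ext l
        exact hs _ (hmin _ (b j).2 l)
      have := congrArg (fun t => b.repr t j) hb
      simp at this
      exact hs0 this
    exact (PDLT.of_min g hg hsub).projective

end L9

open CategoryTheory IsLocalRing RingTheory.Sequence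
section L10
variable {R : Type} [CommRing R]

lemma wr_cons {x : R} {rs : List R} (hx : IsSMulRegular R x)
    (h : IsWeaklyRegular (R ⧸ Ideal.span {x}) (rs.map (Ideal.Quotient.mk (Ideal.span {x})))) :
    IsWeaklyRegular R (x :: rs) := by
  rw [isWeaklyRegular_cons_iff]
  refine ⟨hx, ?_⟩
  have h1 := (isWeaklyRegular_map_algebraMap_iff (R ⧸ Ideal.span {x}) (R ⧸ Ideal.span {x}) rs).1 h
  refine (LinearEquiv.isWeaklyRegular_congr (R := R) ?_ rs).1 h1
  exact Submodule.quotEquivOfEq _ _ (by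
    rw [← Submodule.ideal_span_singleton_smul]; simp)

lemma isLocalRing_quot [IsLocalRing R] {x : R} (hx : x ∈ maximalIdeal R) :
    IsLocalRing (R ⧸ Ideal.span {x}) := by
  have : Nontrivial (R ⧸ Ideal.span {x}) := by
    apply Ideal.Quotient.nontrivial_iff.2
    intro h
    rw [Ideal.span_singleton_eq_top] at h
    exact hx h
  exact IsLocalRing.of_surjective' (Ideal.Quotient.mk (Ideal.span {x})) Ideal.Quotient.mk_surjective

lemma comap_max_quot [IsLocalRing R] (I : Ideal R) [IsLocalRing (R ⧸ I)] :
    Ideal.comap (Ideal.Quotient.mk I) (maximalIdeal (R ⧸ I)) = maximalIdeal R := by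
  have := Ideal.comap_isMaximal_of_surjective (Ideal.Quotient.mk I) Ideal.Quotient.mk_surjective
    (K := maximalIdeal (R ⧸ I))
  exact IsLocalRing.eq_maximalIdeal this

lemma ofList_cons_max [IsLocalRing R] {x : R} [IsLocalRing (R ⧸ Ideal.span {x})] (rs : List R) :
    Ideal.ofList (rs.map (Ideal.Quotient.mk (Ideal.span {x}))) = maximalIdeal (R ⧸ Ideal.span {x}) ↔
    Ideal.ofList (x :: rs) = maximalIdeal R := by
  rw [← comap_max_quot (Ideal.span {x}), ← Ideal.map_ofList, Ideal.ofList_cons]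
  have h : Ideal.comap (Ideal.Quotient.mk (Ideal.span {x}))
      (Ideal.map (Ideal.Quotient.mk (Ideal.span {x})) (Ideal.ofList rs)) =
      Ideal.span {x} ⊔ Ideal.ofList rs := by
    rw [Ideal.comap_map_of_surjective _ Ideal.Quotient.mk_surjective, sup_comm]
    congr 1
    exact Ideal.mk_ker
  rw [← h]
  exact (Ideal.comap_injective_of_surjective _ Ideal.Quotient.mk_surjective).eq_iff.symm

def RegSeq (R : Type) [CommRing R] [IsLocalRing R] : Prop :=
  ∃ rs : List R, IsWeaklyRegular R rs ∧ Ideal.ofList rs = maximalIdeal R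

lemma exists_prime_dim {d : ℕ} (hd : (d : WithBot ℕ∞) ≤ ringKrullDim R) :
    ∃ q : Ideal R, q.IsPrime ∧ (d : WithBot ℕ∞) ≤ ringKrullDim (R ⧸ q) := by
  obtain ⟨l, hl⟩ := Order.le_krullDim_iff.1 hd
  refine ⟨l.head.asIdeal, l.head.2, ?_⟩
  rw [ringKrullDim_quotient]
  refine Order.le_krullDim_iff.2 ⟨⟨l.length, fun i => ⟨l i, ?_⟩, fun i => ?_⟩, hl⟩
  · exact l.head_le i
  · exact l.step i

lemma dim_le_of_list [IsLocalRing R] [IsNoetherianRing R] (rs : List R)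
    (h : Ideal.ofList rs = maximalIdeal R) : ringKrullDim R ≤ rs.length := by
  refine (ringKrullDim_le_spanFinrank_maximalIdeal R).trans ?_
  have h1 : (maximalIdeal R).spanFinrank ≤ rs.length := by
    classical
    rw [← h]
    have : Ideal.ofList rs = Submodule.span R (rs.toFinset : Set R) := by
      simp [Ideal.ofList]
    rw [this]
    refine (Submodule.spanFinrank_span_le_ncard_of_finite (Finset.finite_toSet _)).trans ?_
    rw [Set.ncard_coe_finset]
    exact List.toFinset_card_le rs
  exact_mod_cast h1

lemma dim_le_quot_succ [IsLocalRing R] [IsNoetherianRing R] {x : R} (hx : x ∈ maximalIdeal R) :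
    ringKrullDim R ≤ ringKrullDim (R ⧸ Ideal.span {x}) + 1 := by
  have := ringKrullDim_le_ringKrullDim_quotient_add_card ({x} : Finset R) (by
    rw [ringJacobson_eq_maximalIdeal R]; simpa using hx)
  rw [Finset.coe_singleton] at this
  simpa using this

lemma reg_domain (rs : List ℕ) : ∀ (R : Type) [CommRing R] [IsLocalRing R] [IsNoetherianRing R]
    (xs : List R) (_ : xs.length = rs.length) (_ : Ideal.ofList xs = maximalIdeal R)
    (_ : ringKrullDim R = xs.length), IsDomain R ∧ IsWeaklyRegular R xs := by
  induction rs with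
  | nil =>
    intro R _ _ _ xs hl hm hd
    obtain rfl : xs = [] := List.length_eq_zero_iff.1 hl
    rw [Ideal.ofList_nil] at hm
    exact ⟨(isField_iff_maximalIdeal_eq.2 hm.symm).isDomain, IsWeaklyRegular.nil R R⟩
  | cons _ rs ih =>
    intro R _ _ _ xs hl hm hd
    obtain _ | ⟨x, xs⟩ := xs
    · simp at hl
    have hx : x ∈ maximalIdeal R := by rw [← hm]; simp [Ideal.mem_sup_left, Ideal.mem_span_singleton_self]
    have := isLocalRing_quot hx
    have hm' := (ofList_cons_max xs).2 hm
    have hd1 : ringKrullDim (R ⧸ Ideal.span {x}) = xs.length := by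
      apply le_antisymm
      · simpa using dim_le_of_list _ hm'
      · have := dim_le_quot_succ hx
        rw [hd] at this
        simp only [List.length_cons, Nat.cast_add, Nat.cast_one] at this
        exact ENat.WithBot.add_le_add_one_right_iff.1 this
    obtain ⟨hdom, hw⟩ := ih (R ⧸ Ideal.span {x}) (xs.map (Ideal.Quotient.mk _)) (by simpa using hl) hm'
      (by simpa using hd1)
    have hxp : (Ideal.span {x}).IsPrime := (Ideal.Quotient.isDomain_iff_prime _).1 hdom
    have hdne : ¬ ((xs.length : WithBot ℕ∞) + 1 ≤ xs.length) := by
      intro h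
      have : xs.length + 1 ≤ xs.length := by exact_mod_cast h
      omega
    obtain ⟨q, hq, hdq⟩ := exists_prime_dim (R := R) hd.ge
    have hqm : q ≤ maximalIdeal R := le_maximalIdeal hq.ne_top
    have hqx : q ≤ Ideal.span {x} := by
      intro r hr
      by_contra hrx
      have hr0 : Ideal.Quotient.mk (Ideal.span {x}) r ≠ 0 := by
        rwa [ne_eq, Ideal.Quotient.eq_zero_iff_mem]
      have h1 := ringKrullDim_succ_le_of_surjective
        (Ideal.Quotient.factor (S := Ideal.span {x}) (T := q ⊔ Ideal.span {x}) le_sup_right)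
        (Ideal.Quotient.factor_surjective _)
        (mem_nonZeroDivisors_of_ne_zero hr0) (by
          rw [Ideal.Quotient.factor_mk, Ideal.Quotient.eq_zero_iff_mem]
          exact Ideal.mem_sup_left hr)
      have : IsLocalRing (R ⧸ q) := by
        have : Nontrivial (R ⧸ q) := Ideal.Quotient.nontrivial_iff.2 hq.ne_top
        exact IsLocalRing.of_surjective' (Ideal.Quotient.mk q) Ideal.Quotient.mk_surjective
      have hxq : Ideal.Quotient.mk q x ∈ maximalIdeal (R ⧸ q) := by
        rw [← Ideal.mem_comap, comap_max_quot]; exact hx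
      have h2 := dim_le_quot_succ hxq
      have h3 : Ideal.span {Ideal.Quotient.mk q x} = (Ideal.span {x}).map (Ideal.Quotient.mk q) := by
        rw [Ideal.map_span, Set.image_singleton]
      rw [h3, ringKrullDim_eq_of_ringEquiv (DoubleQuot.quotQuotEquivQuotSup q (Ideal.span {x}))] at h2
      have h4 := hdq.trans (h2.trans (h1.trans hd1.le))
      simp only [List.length_cons, Nat.cast_add, Nat.cast_one] at h4
      exact hdne h4
    have hxq : x ∉ q := by
      intro h
      have : q = Ideal.span {x} := le_antisymm hqx ((Ideal.span_singleton_le_iff_mem _).2 h)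
      rw [this, hd1] at hdq
      simp only [List.length_cons, Nat.cast_add, Nat.cast_one] at hdq
      exact hdne hdq
    have hq0 : q = ⊥ := by
      refine Submodule.eq_bot_of_le_smul_of_le_jacobson_bot (maximalIdeal R) q
        (IsNoetherian.noetherian q) ?_ (maximalIdeal_le_jacobson _)
      intro r hr
      obtain ⟨s, rfl⟩ := Ideal.mem_span_singleton.1 (hqx hr)
      have hs : s ∈ q := (hq.mem_or_mem hr).resolve_left hxq
      exact Submodule.smul_mem_smul hx hs
    subst hq0
    have hdomR : IsDomain R := IsDomain.of_bot_isPrime R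
    refine ⟨hdomR, wr_cons ?_ hw⟩
    intro a b hab
    exact mul_left_cancel₀ (fun h => hxq (by simp [h])) hab

lemma RegSeq.of_isRegularLocal [IsLocalRing R] [IsNoetherianRing R] (h : IsRegularLocal R) :
    RegSeq R := by
  obtain ⟨s, hs, hc⟩ := h
  have h1 : Ideal.ofList s.toList = maximalIdeal R := by
    rw [← hs]; simp [Ideal.ofList]
  exact ⟨s.toList, (reg_domain (List.replicate s.toList.length 0) R s.toList (by simp) h1
    (by rw [← hc]; simp)).2, h1⟩

lemma RegSeq.isRegularLocal [IsLocalRing R] [IsNoetherianRing R] (h : RegSeq R) :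
    IsRegularLocal R := by
  classical
  obtain ⟨rs, hw, hm⟩ := h
  have hr : IsRegular R rs := (IsLocalRing.isRegular_iff_isWeaklyRegular_of_subset_maximalIdeal
    (fun r hr => by rw [← hm]; exact Ideal.subset_span hr)).2 hw
  have hd := ringKrullDim_add_length_eq_ringKrullDim_of_isRegular rs hr
  rw [hm] at hd
  have h0 : ringKrullDim (R ⧸ maximalIdeal R) = 0 := by
    let : Field (R ⧸ maximalIdeal R) := Ideal.Quotient.field _
    exact ringKrullDim_eq_zero_of_field _
  rw [h0, zero_add] at hd
  have hm2 : Ideal.ofList rs.toFinset.toList = maximalIdeal R := by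
    rw [← hm]; simp [Ideal.ofList]
  refine ⟨rs.toFinset, by rw [← hm]; simp [Ideal.ofList], le_antisymm ?_ ?_⟩
  · rw [← hd]; exact_mod_cast List.toFinset_card_le rs
  · simpa using dim_le_of_list _ hm2
end L10

open CategoryTheory IsLocalRing RingTheory.Sequence
section L9main

lemma exists_functional_kk {R : Type} [CommRing R] [IsLocalRing R]
    (V : Type) [AddCommGroup V] [Module R V]
    (hV : ∀ r ∈ maximalIdeal R, ∀ v : V, r • v = 0) (v : V) (hv : v ≠ 0) :
    ∃ (p : V →ₗ[R] kk R), p v = 1 := by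
  have ht : Module.IsTorsionBySet R V (maximalIdeal R) := fun v r => hV r.1 r.2 v
  let := ht.module
  have : IsScalarTower R (R ⧸ maximalIdeal R) V := ht.isScalarTower
  let : Field (kk R) := Ideal.Quotient.field _
  let i : kk R →ₗ[kk R] V := LinearMap.toSpanSingleton (kk R) V v
  have hi : LinearMap.ker i = ⊥ := LinearMap.ker_toSpanSingleton (kk R) hv
  obtain ⟨p, hp⟩ := i.exists_leftInverse_of_injective hi
  refine ⟨p.restrictScalars R, ?_⟩
  have := congrArg (fun f => f 1) hp
  simpa [i] using this

lemma PDLT.retract {R : Type} [CommRing R] {A B : Type} [AddCommGroup A] [Module R A]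
    [AddCommGroup B] [Module R B] (i : A →ₗ[R] B) (p : B →ₗ[R] A) (hp : p ∘ₗ i = LinearMap.id)
    {n : ℕ} (h : PDLT R B n) : PDLT R A n := fun Y _ _ j hj => (h Y j hj).retract_left i p hp

lemma retract_quot_aux1 {S : Type} [CommRing S] [IsLocalRing S] {W : Type} [AddCommGroup W]
    [Module S W] (w : W) (p : W →ₗ[S] kk S) (hp : p w = 1)
    (hw : ∀ s ∈ maximalIdeal S, s • w = 0) :
    ∃ i : kk S →ₗ[S] W, p ∘ₗ i = LinearMap.id := by
  refine ⟨Submodule.liftQ _ (LinearMap.toSpanSingleton S _ w) (fun s hs => ?_), ?_⟩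
  · rw [LinearMap.mem_ker, LinearMap.toSpanSingleton_apply]; exact hw s hs
  · ext
    change p ((1 : S) • w) = 1
    rw [one_smul, hp]

lemma retract_quot_aux2 {R S : Type} [CommRing R] [CommRing S] [IsLocalRing R] [IsLocalRing S]
    [Algebra R S] (hs : Function.Surjective (algebraMap R S))
    (hm : ∀ r ∈ maximalIdeal R, algebraMap R S r ∈ maximalIdeal S)
    {W V : Type} [AddCommGroup W] [Module R W] [Module S W] [IsScalarTower R S W]
    [AddCommGroup V] [Module R V] (hV : ∀ r ∈ maximalIdeal R, ∀ v : V, r • v = 0)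
    (θ : W →ₗ[R] V) (w : W) (hw : θ w ≠ 0) : ∃ p : W →ₗ[S] kk S, p w = 1 := by
  obtain ⟨p0, hp0⟩ := exists_functional_kk V hV _ hw
  let q : kk R →ₗ[R] kk S := Submodule.liftQ _
    ((Algebra.linearMap S (kk S)).restrictScalars R ∘ₗ Algebra.linearMap R S) (by
      intro r hr
      rw [LinearMap.mem_ker]
      exact Ideal.Quotient.eq_zero_iff_mem.2 (hm r hr))
  have hq : q 1 = 1 := by
    change Ideal.Quotient.mk _ (algebraMap R S 1) = 1
    rw [map_one, map_one]
  refine ⟨(q ∘ₗ p0 ∘ₗ θ).extendScalarsOfSurjective hs, ?_⟩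
  change q (p0 (θ w)) = 1
  rw [hp0, hq]

lemma retract_quot_aux3 {R : Type} [CommRing R] (m : Ideal R) (x : R) (hx : x ∈ m)
    (hx2 : x ∉ m ^ 2) : ∃ θ : QuotSMulTop x m →ₗ[R] (m ⧸ (m • ⊤ : Submodule R m)),
      θ (Submodule.Quotient.mk ⟨x, hx⟩) ≠ 0 := by
  refine ⟨Submodule.mapQ _ _ LinearMap.id (by
    intro y hy
    obtain ⟨z, _, rfl⟩ := hy
    exact Submodule.smul_mem_smul hx trivial), ?_⟩
  intro h
  rw [Submodule.mapQ_apply, Submodule.Quotient.mk_eq_zero] at h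
  apply hx2
  have h2 := Submodule.mem_map_of_mem (f := m.subtype) h
  rw [Submodule.map_smul''] at h2
  rw [pow_two]
  simpa using h2

lemma retract_quot {R : Type} [CommRing R] [IsLocalRing R] {x : R} (hx : x ∈ maximalIdeal R)
    (hx2 : x ∉ maximalIdeal R ^ 2) [IsLocalRing (R ⧸ Ideal.span {x})] :
    ∃ (i : kk (R ⧸ Ideal.span {x}) →ₗ[R ⧸ Ideal.span {x}] QuotSMulTop x (maximalIdeal R))
      (p : QuotSMulTop x (maximalIdeal R) →ₗ[R ⧸ Ideal.span {x}] kk (R ⧸ Ideal.span {x})),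
      p ∘ₗ i = LinearMap.id := by
  have hs : Function.Surjective (algebraMap R (R ⧸ Ideal.span {x})) := Ideal.Quotient.mk_surjective
  obtain ⟨θ, hθ⟩ := retract_quot_aux3 (maximalIdeal R) x hx hx2
  obtain ⟨p, hp⟩ := retract_quot_aux2 hs (fun r hr => by
    rw [← comap_max_quot (Ideal.span {x})] at hr; exact hr) (quot_m_kill (maximalIdeal R)) θ _ hθ
  obtain ⟨i, hi⟩ := retract_quot_aux1 _ p hp (fun s hs' => by
    obtain ⟨r, rfl⟩ := hs s
    have hr : r ∈ maximalIdeal R := by rw [← comap_max_quot (Ideal.span {x})]; exact hs'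
    rw [algebraMap_smul, ← Submodule.Quotient.mk_smul, Submodule.Quotient.mk_eq_zero]
    refine ⟨⟨r, hr⟩, trivial, ?_⟩
    ext
    exact mul_comm _ _)
  exact ⟨i, p, hi⟩

lemma serre_step (R : Type) [CommRing R] [IsLocalRing R] [IsNoetherianRing R]
    (n : ℕ) (h : PDLT R (kk R) (n+1)) : RegSeq R ∨
    ∃ x ∈ maximalIdeal R, IsSMulRegular R x ∧ x ∉ maximalIdeal R ^ 2 := by
  by_cases hm : maximalIdeal R = ⊥
  · exact Or.inl ⟨[], IsWeaklyRegular.nil R R, by simp [hm]⟩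
  right
  by_contra hcon
  push Not at hcon
  -- all elements of m are in m^2 or zero divisors
  have hass : maximalIdeal R ∈ associatedPrimes R R := by
    have hsub : (maximalIdeal R : Set R) ⊆
        ⋃ i ∈ (insert (maximalIdeal R ^ 2) (associatedPrimes R R)), (id i : Ideal R) := by
      intro x hx
      by_cases h2 : x ∈ maximalIdeal R ^ 2
      · exact Set.mem_biUnion (Set.mem_insert _ _) h2
      · have : x ∈ ⋃ p ∈ associatedPrimes R R, (p : Set R) := by
          rw [biUnion_associatedPrimes_eq_compl_nonZeroDivisors]
          intro hn
          exact h2 (hcon x hx (Module.Flat.isSMulRegular_of_nonZeroDivisors hn))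
        exact Set.biUnion_subset_biUnion_left (Set.subset_insert _ _) this
    obtain ⟨P, hP, hle⟩ := (Ideal.subset_union_prime_finite
      ((associatedPrimes.finite R R).insert _) (f := id) (maximalIdeal R ^ 2) (maximalIdeal R ^ 2)
      (fun i hi h1 _ => (hi.resolve_left h1).isPrime)).1 hsub
    rcases hP with rfl | hP
    · exfalso
      apply hm
      refine Submodule.eq_bot_of_le_smul_of_le_jacobson_bot (maximalIdeal R) _
        (IsNoetherian.noetherian _) ?_ (maximalIdeal_le_jacobson _)
      rw [id, pow_two] at hle
      exact hle
    · have := (maximalIdeal.isMaximal R).eq_of_le hP.isPrime.ne_top hle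
      rw [this]; exact hP
  rw [AssociatedPrimes.mem_iff, isAssociatedPrime_iff] at hass
  obtain ⟨_, s, hs⟩ := hass
  have hmem : ∀ r, r ∈ maximalIdeal R ↔ r * s = 0 := by
    intro r
    rw [hs, Submodule.mem_colon_singleton]; simp
  have hs0 : s ≠ 0 := by
    rintro rfl
    have := (hmem 1).2 (by simp)
    exact (Ideal.ne_top_iff_one _).1 (maximalIdeal.isMaximal R).ne_top this
  have hproj := proj_of_socle s hs0 (fun r hr => by rw [mul_comm]; exact (hmem r).1 hr) n _ h
  have : Module.Free R (kk R) := Module.free_of_flat_of_isLocalRing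
  let b := Module.Free.chooseBasis R (kk R)
  obtain ⟨j⟩ := b.index_nonempty
  apply hm
  rw [eq_bot_iff]
  intro r hr
  have := congrArg (fun t => b.repr t j) (kk_smul hr (b j))
  simpa using this

lemma serre (d : ℕ) : ∀ (R : Type) [CommRing R] [IsLocalRing R] [IsNoetherianRing R]
    (_ : ringKrullDim R < d) (n : ℕ) (_ : PDLT R (kk R) (n+1)), RegSeq R := by
  induction d with
  | zero =>
    intro R _ _ _ hd
    exact absurd hd (not_lt.2 ringKrullDim_nonneg_of_nontrivial)
  | succ d ih =>
    intro R _ _ _ hd n h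
    rcases serre_step R n h with h1 | ⟨x, hx, hreg, hx2⟩
    · exact h1
    have := isLocalRing_quot hx
    have hd2 := ringKrullDim_quotient_span_singleton_succ_eq_ringKrullDim hreg hx
    have hd3 : ringKrullDim (R ⧸ Ideal.span {x}) < d := by
      rw [← hd2] at hd
      by_contra hcon
      push Not at hcon
      refine absurd hd (not_lt.2 ?_)
      push_cast
      exact add_le_add_left hcon 1
    have hP : PDLT R (maximalIdeal R) (n+1) := by
      have := PDLT.ker (Submodule.mkQ (maximalIdeal R)) (Submodule.mkQ_surjective _)
        (h.mono (Nat.le_succ _))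
      exact this.congr (LinearEquiv.ofEq _ _ (Submodule.ker_mkQ _))
    have hP2 := PDLT.quot x hreg n (maximalIdeal R) (fun a b hab => by
      apply Subtype.ext
      exact hreg (congrArg Subtype.val hab)) hP
    obtain ⟨i, p, hip⟩ := retract_quot hx hx2
    obtain ⟨ys, hw, hm⟩ := ih (R ⧸ Ideal.span {x}) hd3 n (hP2.retract i p hip)
    obtain ⟨rs, rfl⟩ := (List.map_surjective_iff.2 (Ideal.Quotient.mk_surjective (I := Ideal.span {x}))) ys
    exact ⟨x :: rs, wr_cons hreg hw, (ofList_cons_max rs).1 hm⟩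

lemma serre' (R : Type) [CommRing R] [IsLocalRing R] [IsNoetherianRing R]
    (n : ℕ) (h : PDLT R (kk R) n) : IsRegularLocal R := by
  refine RegSeq.isRegularLocal (serre ((maximalIdeal R).spanFinrank + 1) R ?_ n (h.mono (Nat.le_succ _)))
  refine lt_of_le_of_lt (ringKrullDim_le_spanFinrank_maximalIdeal R) ?_
  exact_mod_cast Nat.lt_succ_self _

end L9main

open CategoryTheory IsLocalRing RingTheory.Sequence
section L11
variable {R : Type} [CommRing R]

lemma exists_inj_embed (Y : Type) [AddCommGroup Y] [Module R Y] :
    ∃ (J : Type) (_ : AddCommGroup J) (_ : Module R J) (f : Y →ₗ[R] J),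
      Function.Injective f ∧ Module.Injective R J := by
  let P : ModuleCat R := Injective.under (ModuleCat.of R Y)
  let ι : ModuleCat.of R Y ⟶ P := Injective.ι (ModuleCat.of R Y)
  have hι : Mono ι := inferInstanceAs (Mono (Injective.ι (ModuleCat.of R Y)))
  have hP : Injective P := inferInstanceAs (Injective (Injective.under (ModuleCat.of R Y)))
  refine ⟨P, inferInstance, inferInstance, ι.hom, (ModuleCat.mono_iff_injective _).1 hι, ?_⟩
  have : Injective (ModuleCat.of R P) := hP
  exact Module.injective_module_of_injective_object R P

lemma range_exact {A B : Type} [AddCommGroup A] [Module R A] [AddCommGroup B] [Module R B]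
    (f : A →ₗ[R] B) : Function.Exact f (LinearMap.range f).mkQ := by
  intro x; simp

lemma inj_of_ext_one (Y : Type) [AddCommGroup Y] [Module R Y]
    (h : ∀ I : Ideal R, EV R (R ⧸ I) Y 1) : Module.Injective R Y := by
  apply Module.Baer.injective
  intro I g
  obtain ⟨ψ, hψ⟩ := EV.extend (f := I.subtype) (g := I.mkQ) (by
    intro x; simpa using Ideal.Quotient.eq_zero_iff_mem)
    (Submodule.subtype_injective _) (Submodule.mkQ_surjective _) (h I) g
  exact ⟨ψ, fun x hx => by rw [← hψ]; rfl⟩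

lemma inj_of_ideals (n : ℕ) : ∀ (Y : Type) [AddCommGroup Y] [Module R Y]
    (_ : ∀ I : Ideal R, EV R (R ⧸ I) Y (n+1)) (L : Type) [AddCommGroup L] [Module R L] (i : ℕ)
    (_ : n + 1 ≤ i), EV R L Y i := by
  induction n with
  | zero =>
    intro Y _ _ h L _ _ i hi
    obtain ⟨j, rfl⟩ : ∃ j, i = j+1 := ⟨i-1, by omega⟩
    exact EV.of_inj (inj_of_ext_one Y h) j
  | succ n ih =>
    intro Y _ _ h L _ _ i hi
    obtain ⟨j, rfl⟩ : ∃ j, i = j+1+1 := ⟨i-2, by omega⟩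
    obtain ⟨J, _, _, f, hf, hJ⟩ := exists_inj_embed (R := R) Y
    exact EV.cov1 (range_exact f) hf (Submodule.mkQ_surjective _)
      (ih _ (fun I => EV.cov3 (range_exact f) hf (Submodule.mkQ_surjective _)
        (EV.of_inj hJ _) (h I)) L (j+1) (by omega)) (EV.of_inj hJ _)

variable [IsLocalRing R]

lemma RegSeq.pd [IsNoetherianRing R] (h : RegSeq R) : ∃ d, PDLT R (kk R) (d+1) := by
  obtain ⟨rs, hw, hm⟩ := h
  refine ⟨rs.length, fun Y _ _ i hi => ?_⟩
  obtain ⟨j, rfl⟩ : ∃ j, i = (j+1) + rs.length := ⟨i-1-rs.length, by omega⟩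
  have := EV.list_left (N := Y) rs R (j+1) hw (fun i hi _ => by
    obtain ⟨j, rfl⟩ : ∃ j, i = j+1 := ⟨i-1, by omega⟩
    exact EV.of_proj j)
  refine this.congr_left (Submodule.quotEquivOfEq _ _ ?_)
  rw [hm]; simp

lemma pd_all [IsNoetherianRing R] {d : ℕ} (h : PDLT R (kk R) (d+1)) (M : Type) [AddCommGroup M] [Module R M]
    [Module.Finite R M] : PDLT R M (d+1) := L8 d M (h _ _ le_rfl)

structure Ul (R : Type) [CommRing R] [IsLocalRing R] (M : Type) [AddCommGroup M] [Module R M]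
    (rs : List R) : Prop where
  nt : Nontrivial M
  mem : ∀ x ∈ rs, x ∈ maximalIdeal R
  wr : IsWeaklyRegular M rs
  eq : (maximalIdeal R) • (⊤ : Submodule R M) = (Ideal.ofList rs) • ⊤

variable {M N : Type} [AddCommGroup M] [Module R M] [AddCommGroup N] [Module R N] {rs : List R}

lemma Ul.kill (h : Ul R M rs) : ∀ r ∈ maximalIdeal R,
    ∀ v : (M ⧸ (Ideal.ofList rs • ⊤ : Submodule R M)), r • v = 0 := by
  rw [← h.eq]; exact quot_m_kill M

lemma Ul.quot_nt [Module.Finite R M] (h : Ul R M rs) :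
    Nontrivial (M ⧸ (Ideal.ofList rs • ⊤ : Submodule R M)) := by
  have := h.nt
  rw [← h.eq]; exact exists_map_kk M

lemma Ul.retract [Module.Finite R M] (h : Ul R M rs) :
    ∃ (i : kk R →ₗ[R] (M ⧸ (Ideal.ofList rs • ⊤ : Submodule R M)))
      (p : (M ⧸ (Ideal.ofList rs • ⊤ : Submodule R M)) →ₗ[R] kk R), p ∘ₗ i = LinearMap.id := by
  have := h.quot_nt
  exact exists_retract_kk _ h.kill

lemma Ul.retract_char [Module.Finite R M] (h : Ul R M rs) :
    ∃ (i : kk R →ₗ[R] CharacterModule (M ⧸ (Ideal.ofList rs • ⊤ : Submodule R M)))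
      (p : CharacterModule (M ⧸ (Ideal.ofList rs • ⊤ : Submodule R M)) →ₗ[R] kk R),
      p ∘ₗ i = LinearMap.id := by
  have := h.quot_nt
  obtain ⟨v, hv⟩ := exists_ne (0 : (M ⧸ (Ideal.ofList rs • ⊤ : Submodule R M)))
  have : Nontrivial (CharacterModule (M ⧸ (Ideal.ofList rs • ⊤ : Submodule R M))) := by
    obtain ⟨c, hc⟩ := CharacterModule.exists_character_apply_ne_zero_of_ne_zero hv
    exact ⟨c, 0, fun h => hc (by rw [h]; rfl)⟩
  refine exists_retract_kk _ (fun r hr c => ?_)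
  ext v
  change c (r • v) = 0
  rw [h.kill r hr, map_zero]

variable [IsNoetherianRing R]

lemma reg_of_kk {n : ℕ} (h : EV R (kk R) (kk R) n) : IsRegularLocal R := serre' R n (L5 n _ h)

lemma L6 [Module.Finite R M] (hM : Ul R M rs) {n : ℕ} (h : PDLT R M n) : IsRegularLocal R := by
  obtain ⟨i, p, hp⟩ := hM.retract
  exact reg_of_kk ((EV.list_left (N := kk R) rs M n hM.wr (fun i hi _ => h _ i hi)).retract_left i p hp)

lemma L6i [Module.Finite R N] (hN : Ul R N rs) {n : ℕ} (h : ∀ i, n ≤ i → EV R (kk R) N i) :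
    IsRegularLocal R := by
  obtain ⟨i, p, hp⟩ := hN.retract
  exact reg_of_kk ((EV.list_right rs N n hN.wr (fun i hi _ => h i hi)).retract_right i p hp)

end L11

open CategoryTheory IsLocalRing RingTheory.Sequence
section L7
variable {R : Type} [CommRing R]

def MKill (m : Ideal R) (c : ℕ) (L : Type) [AddCommGroup L] [Module R L] : Prop :=
  ∀ r ∈ m ^ c, ∀ x : L, r • x = 0

/-- effaceability of Ext on modules of finite length -/
def EE (m : Ideal R) (N : Type) [AddCommGroup N] [Module R N] (j : ℕ) : Prop :=
  ∀ (L : Type) [AddCommGroup L] [Module R L] [Module.Finite R L] (c : ℕ) (_ : MKill m c L)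
    (e : Abelian.Ext (ModuleCat.of R L) (ModuleCat.of R N) j),
    ∃ (L' : Type) (_ : AddCommGroup L') (_ : Module R L') (_ : Module.Finite R L') (c' : ℕ)
      (_ : MKill m c' L') (π : L' →ₗ[R] L), Function.Surjective π ∧
      (Abelian.Ext.mk₀ (ModuleCat.ofHom π)).comp e (zero_add j) = 0

variable {m : Ideal R}
variable {A B C : Type} [AddCommGroup A] [Module R A] [AddCommGroup B] [Module R B]
  [AddCommGroup C] [Module R C]

lemma EE.ext_closed {f : A →ₗ[R] B} {g : B →ₗ[R] C} (h : Function.Exact f g)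
    (hf : Function.Injective f) (hg : Function.Surjective g) {j : ℕ}
    (hA : EE m A j) (hC : EE m C j) : EE m B j := by
  intro L _ _ _ c hc e
  obtain ⟨L', _, _, _, c', hc', π, hπ, h0⟩ := hC L c hc
    (e.comp (Abelian.Ext.mk₀ (ModuleCat.ofHom g)) (add_zero j))
  rw [← Abelian.Ext.comp_assoc_of_third_deg_zero] at h0
  obtain ⟨e1, he1⟩ := Abelian.Ext.covariant_sequence_exact₂ _ (scx_exact h hf hg) _ h0
  obtain ⟨L'', _, _, _, c'', hc'', π', hπ', h1⟩ := hA L' c' hc' e1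
  refine ⟨L'', inferInstance, inferInstance, inferInstance, c'', hc'', π ∘ₗ π', hπ.comp hπ', ?_⟩
  rw [ModuleCat.ofHom_comp, ← Abelian.Ext.mk₀_comp_mk₀_assoc, ← he1,
    ← Abelian.Ext.comp_assoc_of_third_deg_zero, h1, Abelian.Ext.zero_comp]

lemma EE.shift {f : A →ₗ[R] B} {g : B →ₗ[R] C} (h : Function.Exact f g)
    (hf : Function.Injective f) (hg : Function.Surjective g) {j : ℕ} (hC : EE m C j)
    (L : Type) [AddCommGroup L] [Module R L] [Module.Finite R L] (c : ℕ) (hc : MKill m c L)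
    (e : Abelian.Ext (ModuleCat.of R L) (ModuleCat.of R A) (j+1))
    (he : e.comp (Abelian.Ext.mk₀ (ModuleCat.ofHom f)) (add_zero _) = 0) :
    ∃ (L' : Type) (_ : AddCommGroup L') (_ : Module R L') (_ : Module.Finite R L') (c' : ℕ)
      (_ : MKill m c' L') (π : L' →ₗ[R] L), Function.Surjective π ∧
      (Abelian.Ext.mk₀ (ModuleCat.ofHom π)).comp e (zero_add _) = 0 := by
  obtain ⟨e1, he1⟩ := Abelian.Ext.covariant_sequence_exact₁ _ (scx_exact h hf hg) e he rfl
  obtain ⟨L', _, _, _, c', hc', π, hπ, h0⟩ := hC L c hc e1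
  refine ⟨L', inferInstance, inferInstance, inferInstance, c', hc', π, hπ, ?_⟩
  rw [← he1, ← Abelian.Ext.comp_assoc (a₁₂ := j) _ _ _ (by lia) (by lia) (by lia), h0,
    Abelian.Ext.zero_comp]

lemma ext_kill {X Y : Type} [AddCommGroup X] [Module R X] [AddCommGroup Y] [Module R Y] (r : R)
    (hr : ∀ x : X, r • x = 0) {n : ℕ}
    (e : Abelian.Ext (ModuleCat.of R X) (ModuleCat.of R Y) n) :
    e.comp (Abelian.Ext.mk₀ (ModuleCat.ofHom (LinearMap.lsmul R Y r))) (add_zero _) = 0 := by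
  have h0 : r • 𝟙 (ModuleCat.of R X) = 0 := by
    ext x; exact hr x
  have h2 : r • e = 0 := by
    have : r • e = (Abelian.Ext.mk₀ (r • 𝟙 (ModuleCat.of R X))).comp e (zero_add n) := by
      simp [Abelian.Ext.mk₀_smul]
    rw [this, h0]; simp
  have h3 : e.comp (Abelian.Ext.mk₀ (r • 𝟙 (ModuleCat.of R Y))) (add_zero n) = r • e := by
    simp [Abelian.Ext.mk₀_smul]
  rw [← h2, ← h3]
  rfl

lemma EE.quot_pow (N : Type) [AddCommGroup N] [Module R N] (x : R) (hx : IsSMulRegular N x) {j : ℕ}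
    (h : EE m (QuotSMulTop x N) j) (a : ℕ) : EE m (QuotSMulTop (x ^ (a+1)) N) j := by
  induction a with
  | zero => rw [zero_add, pow_one]; exact h
  | succ a ih =>
    let f : QuotSMulTop (x ^ (a+1)) N →ₗ[R] QuotSMulTop (x ^ (a+1+1)) N :=
      Submodule.mapQ _ _ (LinearMap.lsmul R N x) (by
        rintro _ ⟨n, _, rfl⟩
        refine ⟨n, trivial, ?_⟩
        simp [pow_succ, smul_smul, mul_comm])
    let g : QuotSMulTop (x ^ (a+1+1)) N →ₗ[R] QuotSMulTop x N :=
      Submodule.mapQ _ _ LinearMap.id (by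
        rintro _ ⟨n, _, rfl⟩
        refine ⟨x ^ (a+1) • n, trivial, ?_⟩
        simp [pow_succ, smul_smul, mul_comm])
    have hg : Function.Surjective g := by
      intro y
      obtain ⟨n, rfl⟩ := Submodule.Quotient.mk_surjective _ y
      exact ⟨Submodule.Quotient.mk n, rfl⟩
    have hf : Function.Injective f := by
      rw [injective_iff_map_eq_zero]
      intro y hy
      obtain ⟨n, rfl⟩ := Submodule.Quotient.mk_surjective _ y
      rw [Submodule.mapQ_apply, Submodule.Quotient.mk_eq_zero] at hy
      obtain ⟨z, _, hz⟩ := hy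
      rw [Submodule.Quotient.mk_eq_zero]
      refine ⟨z, trivial, hx ?_⟩
      change x • (x^(a+1) • z) = x • n
      rw [smul_smul, ← pow_succ']
      exact hz
    have hex : Function.Exact f g := by
      intro y
      obtain ⟨n, rfl⟩ := Submodule.Quotient.mk_surjective _ y
      constructor
      · intro hy
        rw [Submodule.mapQ_apply, Submodule.Quotient.mk_eq_zero] at hy
        obtain ⟨z, _, hz⟩ := hy
        exact ⟨Submodule.Quotient.mk z, congrArg Submodule.Quotient.mk hz⟩
      · rintro ⟨w, hw⟩
        obtain ⟨z, rfl⟩ := Submodule.Quotient.mk_surjective _ w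
        rw [← hw, Submodule.mapQ_apply, Submodule.mapQ_apply, Submodule.Quotient.mk_eq_zero]
        exact ⟨z, trivial, rfl⟩
    exact EE.ext_closed hex hf hg ih h

lemma EE.reg_step (N : Type) [AddCommGroup N] [Module R N] (x : R) (hxm : x ∈ m)
    (hx : IsSMulRegular N x) {j : ℕ}
    (h : EE m (QuotSMulTop x N) j) : EE m N (j+1) := by
  intro L _ _ _ c hc e
  have hx' : IsSMulRegular N (x^(c+1)) := hx.pow _
  refine EE.shift (LinearMap.exact_lsmul_mkQ_smul_top N (x^(c+1))) hx'
    (Submodule.mkQ_surjective _) (h.quot_pow N x hx c) L c hc e ?_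
  exact ext_kill _ (fun y => by
    rw [pow_succ', mul_smul, hc _ (Ideal.pow_mem_pow hxm c), smul_zero]) e

def gam (m : Ideal R) (I : Type) [AddCommGroup I] [Module R I] : Submodule R I where
  carrier := {y | ∃ c, ∀ r ∈ m ^ c, r • y = 0}
  add_mem' := by
    rintro a b ⟨c, hc⟩ ⟨d, hd⟩
    refine ⟨c + d, fun r hr => ?_⟩
    rw [smul_add, hc r (Ideal.pow_le_pow_right (by omega) hr),
      hd r (Ideal.pow_le_pow_right (by omega) hr), add_zero]
  zero_mem' := ⟨0, fun r _ => smul_zero r⟩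
  smul_mem' := by
    rintro s a ⟨c, hc⟩
    exact ⟨c, fun r hr => by rw [smul_comm, hc r hr, smul_zero]⟩

def Tors (m : Ideal R) (N : Type) [AddCommGroup N] [Module R N] : Prop :=
  ∀ y : N, ∃ c, ∀ r ∈ m ^ c, r • y = 0

lemma Tors.uniform {N : Type} [AddCommGroup N] [Module R N] (h : Tors m N) {L : Type}
    [AddCommGroup L] [Module R L] [Module.Finite R L] (g : L →ₗ[R] N) :
    ∃ c, ∀ r ∈ m ^ c, ∀ x : L, r • g x = 0 := by
  classical
  obtain ⟨S, hS⟩ := (inferInstance : Module.Finite R L).fg_top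
  choose c hc using h
  refine ⟨S.sup (fun s => c (g s)), fun r hr x => ?_⟩
  have hle : (⊤ : Submodule R L) ≤ LinearMap.ker (r • g) := by
    rw [← hS, Submodule.span_le]
    intro s hs
    exact hc _ r (Ideal.pow_le_pow_right (Finset.le_sup (f := fun s => c (g s)) hs) hr)
  exact hle (x := x) trivial

lemma gam_tors (I : Type) [AddCommGroup I] [Module R I] : Tors m (gam m I) := by
  rintro ⟨y, c, hc⟩
  exact ⟨c, fun r hr => Subtype.ext (hc r hr)⟩

lemma gam_inj [IsNoetherianRing R] (I : Type) [AddCommGroup I] [Module R I]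
    (hI : Module.Injective R I) : Module.Injective R (gam m I) := by
  apply Module.Baer.injective
  intro a g
  obtain ⟨c, hc⟩ := (gam_tors (m := m) I).uniform g
  obtain ⟨k, hk⟩ := m.exists_pow_inf_eq_pow_smul (a : Submodule R R)
  have hk' := hk (c + k) (by omega)
  let K : Ideal R := m ^ (c + k)
  have hkey : ∀ x : a, (x : R) ∈ K → g x = 0 := by
    intro x hx
    have hx2 : (x : R) ∈ m ^ (c+k) • (⊤ : Submodule R R) ⊓ a := ⟨by simpa using hx, x.2⟩
    rw [hk', Nat.add_sub_cancel] at hx2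
    have hx3 : (x : R) ∈ m ^ c • (a : Submodule R R) :=
      Submodule.smul_mono le_rfl inf_le_right hx2
    have h4 : m ^ c • (a : Submodule R R) = Submodule.map a.subtype (m ^ c • ⊤) := by
      rw [Submodule.map_smul'']; simp
    rw [h4] at hx3
    obtain ⟨z, hz, hzx⟩ := hx3
    obtain rfl : z = x := Subtype.ext hzx
    have : (m ^ c • ⊤ : Submodule R a) ≤ LinearMap.ker g := by
      rw [Submodule.smul_le]
      intro r hr y _
      rw [LinearMap.mem_ker, map_smul]
      exact hc r hr y
    exact this hz
  let i : (a ⧸ Submodule.comap a.subtype K) →ₗ[R] (R ⧸ K) := Submodule.mapQ _ _ a.subtype le_rfl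
  have hi : Function.Injective i := by
    rw [injective_iff_map_eq_zero]
    intro y hy
    obtain ⟨x, rfl⟩ := Submodule.Quotient.mk_surjective _ y
    rw [Submodule.mapQ_apply, Submodule.Quotient.mk_eq_zero] at hy
    rw [Submodule.Quotient.mk_eq_zero]
    exact hy
  let g' : (a ⧸ Submodule.comap a.subtype K) →ₗ[R] I :=
    Submodule.liftQ _ ((gam m I).subtype ∘ₗ g) (fun x hx => by
      rw [LinearMap.mem_ker, LinearMap.comp_apply, hkey x hx, map_zero])
  obtain ⟨ψ, hψ⟩ := hI.out i hi g'
  let ψ' : R →ₗ[R] I := ψ ∘ₗ Submodule.mkQ K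
  refine ⟨ψ'.codRestrict (gam m I) (fun r => ⟨c + k, fun s hs => ?_⟩), fun x hx => ?_⟩
  · change s • ψ (Submodule.Quotient.mk r) = 0
    rw [← map_smul, ← Submodule.Quotient.mk_smul, (Submodule.Quotient.mk_eq_zero K).2, map_zero]
    exact Ideal.mul_mem_right _ _ hs
  · apply Subtype.ext
    exact hψ (Submodule.Quotient.mk ⟨x, hx⟩)

end L7

open CategoryTheory IsLocalRing RingTheory.Sequence
section L7b
variable {R : Type} [CommRing R] {m : Ideal R}

lemma tors_embed [IsNoetherianRing R] (N : Type) [AddCommGroup N] [Module R N] (h : Tors m N) :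
    ∃ (J : Type) (_ : AddCommGroup J) (_ : Module R J) (f : N →ₗ[R] J),
      Function.Injective f ∧ Module.Injective R J ∧ Tors m J := by
  obtain ⟨I, _, _, f, hf, hI⟩ := exists_inj_embed (R := R) N
  refine ⟨gam m I, inferInstance, inferInstance, f.codRestrict (gam m I) (fun y => ?_), ?_,
    gam_inj I hI, gam_tors I⟩
  · obtain ⟨c, hc⟩ := h y
    exact ⟨c, fun r hr => by rw [← map_smul, hc r hr, map_zero]⟩
  · intro a b hab
    exact hf (congrArg Subtype.val hab)

lemma Tors.quot {J : Type} [AddCommGroup J] [Module R J] (h : Tors m J) (S : Submodule R J) :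
    Tors m (J ⧸ S) := by
  intro y
  obtain ⟨y, rfl⟩ := Submodule.Quotient.mk_surjective _ y
  obtain ⟨c, hc⟩ := h y
  exact ⟨c, fun r hr => by rw [← Submodule.Quotient.mk_smul, hc r hr]; rfl⟩

lemma tors_lift {J C : Type} [AddCommGroup J] [Module R J] [AddCommGroup C] [Module R C]
    (hJ : Tors m J) (g : J →ₗ[R] C) (hg : Function.Surjective g) {L : Type} [AddCommGroup L]
    [Module R L] [Module.Finite R L] {c : ℕ} (hc : MKill m c L) (φ : L →ₗ[R] C) :
    ∃ (L' : Type) (_ : AddCommGroup L') (_ : Module R L') (_ : Module.Finite R L') (c' : ℕ)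
      (_ : MKill m c' L') (π : L' →ₗ[R] L) (ψ : L' →ₗ[R] J), Function.Surjective π ∧
      g ∘ₗ ψ = φ ∘ₗ π := by
  obtain ⟨n, p, hp⟩ := Module.Finite.exists_fin' R L
  obtain ⟨q, hq⟩ := Module.projective_lifting_property g (φ ∘ₗ p) hg
  obtain ⟨d, hd⟩ := hJ.uniform q
  let S : Submodule R (Fin n → R) := m ^ (c + d) • ⊤
  have hSp : S ≤ LinearMap.ker p := by
    rw [Submodule.smul_le]
    intro r hr y _
    rw [LinearMap.mem_ker, map_smul]
    exact hc r (Ideal.pow_le_pow_right (by omega) hr) _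
  have hSq : S ≤ LinearMap.ker q := by
    rw [Submodule.smul_le]
    intro r hr y _
    rw [LinearMap.mem_ker, map_smul]
    exact hd r (Ideal.pow_le_pow_right (by omega) hr) _
  refine ⟨(Fin n → R) ⧸ S, inferInstance, inferInstance, inferInstance, c + d, ?_,
    S.liftQ p hSp, S.liftQ q hSq, ?_, ?_⟩
  · intro r hr y
    obtain ⟨y, rfl⟩ := Submodule.Quotient.mk_surjective _ y
    rw [← Submodule.Quotient.mk_smul, Submodule.Quotient.mk_eq_zero]
    exact Submodule.smul_mem_smul hr trivial
  · intro y
    obtain ⟨z, rfl⟩ := hp y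
    exact ⟨Submodule.Quotient.mk z, rfl⟩
  · apply Submodule.linearMap_qext
    exact hq

lemma EE.tors [IsNoetherianRing R] (j : ℕ) : ∀ (N : Type) [AddCommGroup N] [Module R N]
    (_ : Tors m N), EE m N (j+1) := by
  induction j with
  | zero =>
    intro N _ _ hN L _ _ _ c hc e
    obtain ⟨J, _, _, f, hf, hJ, hT⟩ := tors_embed N hN
    obtain ⟨e1, he1⟩ := Abelian.Ext.covariant_sequence_exact₁ _
      (scx_exact (range_exact f) hf (Submodule.mkQ_surjective _)) e
      ((EV.of_inj (R := R) (X := L) hJ 0).eq_zero _) rfl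
    obtain ⟨φ, rfl⟩ := (Abelian.Ext.mk₀_bijective _ _).2 e1
    obtain ⟨L', _, _, _, c', hc', π, ψ, hπ, hψ⟩ := tors_lift hT (LinearMap.range f).mkQ
      (Submodule.mkQ_surjective _) hc φ.hom
    refine ⟨L', inferInstance, inferInstance, inferInstance, c', hc', π, hπ, ?_⟩
    have h1 : ModuleCat.ofHom π ≫ φ = ModuleCat.ofHom ψ ≫ ModuleCat.ofHom (LinearMap.range f).mkQ := by
      ext x
      exact (LinearMap.congr_fun hψ x).symm
    rw [← he1]
    refine (Abelian.Ext.mk₀_comp_mk₀_assoc _ _ _).trans ?_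
    rw [h1, ← Abelian.Ext.mk₀_comp_mk₀_assoc]
    have := (scx_exact (range_exact f) hf (Submodule.mkQ_surjective _)).comp_extClass
    dsimp only at this
    rw [this, Abelian.Ext.comp_zero]
  | succ j ih =>
    intro N _ _ hN L _ _ _ c hc e
    obtain ⟨J, _, _, f, hf, hJ, hT⟩ := tors_embed N hN
    exact EE.shift (range_exact f) hf (Submodule.mkQ_surjective _) (ih _ (hT.quot _)) L c hc e
      ((EV.of_inj (R := R) (X := L) hJ _).eq_zero _)

lemma Tors.congr {N N' : Type} [AddCommGroup N] [Module R N] [AddCommGroup N'] [Module R N']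
    (e : N ≃ₗ[R] N') (h : Tors m N) : Tors m N' := by
  intro y
  obtain ⟨c, hc⟩ := h (e.symm y)
  exact ⟨c, fun r hr => e.symm.injective (by rw [map_smul, hc r hr, map_zero])⟩

lemma EE.list [IsNoetherianRing R] (rs : List R) : ∀ (N : Type) [AddCommGroup N] [Module R N]
    (_ : ∀ x ∈ rs, x ∈ m) (_ : IsWeaklyRegular N rs)
    (_ : Tors m (N ⧸ (Ideal.ofList rs • ⊤ : Submodule R N))) (j : ℕ), EE m N (j + rs.length + 1) := by
  induction rs with
  | nil =>
    intro N _ _ _ _ hT j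
    exact EE.tors j N (hT.congr (quotNilEquiv N))
  | cons x rs ih =>
    intro N _ _ hm hw hT j
    rw [isWeaklyRegular_cons_iff] at hw
    have := ih (QuotSMulTop x N) (fun y hy => hm y (by simp [hy])) hw.2
      (hT.congr (Submodule.quotOfListConsSMulTopEquivQuotSMulTopInner N x rs)) j
    exact EE.reg_step N x (hm x (by simp)) hw.1 this

variable [IsLocalRing R] [IsNoetherianRing R]

lemma EV.fin_len {N : Type} [AddCommGroup N] [Module R N] {j : ℕ} (h : EV R (kk R) N j)
    (L : Type) [AddCommGroup L] [Module R L] [hL : Module.Finite R L] (c : ℕ)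
    (hc : MKill (maximalIdeal R) c L) : EV R L N j := by
  refine IsNoetherianRing.induction_on_isQuotientEquivQuotientPrime (A := R) (M := L) hL
    (motive := fun L _ _ _ => MKill (maximalIdeal R) c L → EV R L N j) ?_ ?_ ?_ hc
  · intro L _ _ _ _ _
    exact EV.of_subsingleton_left j
  · intro L _ _ _ p e hc
    have hp := p.2
    have hle : maximalIdeal R ≤ p.1 := by
      intro r hr
      have := hc (r ^ c) (Ideal.pow_mem_pow hr c) (e.symm 1)
      rw [← map_smul, map_eq_zero_iff _ e.symm.injective] at this
      have h2 : Ideal.Quotient.mk p.1 (r ^ c) = 0 := by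
        rw [← this, Algebra.smul_def, mul_one]; rfl
      exact hp.mem_of_pow_mem c (Ideal.Quotient.eq_zero_iff_mem.1 h2)
    have heq : maximalIdeal R = p.1 := (maximalIdeal.isMaximal R).eq_of_le hp.ne_top hle
    exact (h.congr_left (Submodule.quotEquivOfEq _ _ heq)).congr_left e.symm
  · intro A _ _ _ B _ _ _ C _ _ _ f g hf hg hex hA hC hB
    refine EV.con2 hex hf hg (hA ?_) (hC ?_)
    · intro r hr x
      apply hf
      rw [map_smul, hB r hr, map_zero]
    · intro r hr x
      obtain ⟨y, rfl⟩ := hg x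
      rw [← map_smul, hB r hr, map_zero]

lemma L7_step {N : Type} [AddCommGroup N] [Module R N] {j : ℕ} (h : EV R (kk R) N j)
    (hE : EE (maximalIdeal R) N (j+1)) : EV R (kk R) N (j+1) := EV.mk' fun e => by
  obtain ⟨L', _, _, _, c', hc', π, hπ, h0⟩ := hE (kk R) 1 (by
    intro r hr x
    rw [pow_one] at hr
    exact kk_smul hr x) e
  obtain ⟨e1, he1⟩ := Abelian.Ext.contravariant_sequence_exact₃
    (scx_exact (ker_exact π) (Submodule.subtype_injective _) hπ) _ e h0 (add_comm 1 j)
  have hk : EV R (LinearMap.ker π) N j := h.fin_len _ c' (fun r hr x => Subtype.ext (hc' r hr x))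
  rw [← he1, show e1 = 0 from hk.eq_zero e1]
  exact Abelian.Ext.comp_zero ..

lemma L7 {N : Type} [AddCommGroup N] [Module R N] {rs : List R} (hN : Ul R N rs) {j : ℕ}
    (hj : rs.length ≤ j) (h : EV R (kk R) N j) : ∀ i, j ≤ i → EV R (kk R) N i := by
  intro i hi
  induction i, hi using Nat.le_induction with
  | base => exact h
  | succ i hi ih =>
    apply L7_step ih
    have := EE.list (m := maximalIdeal R) rs N hN.mem hN.wr (fun y => ⟨1, fun r hr =>
      hN.kill r (by simpa using hr) y⟩) (i - rs.length)
    rwa [Nat.sub_add_cancel (by omega)] at this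

lemma IsUlrich.ul {M : Type} [AddCommGroup M] [Module R M] {s : ℕ} (h : IsUlrich R M s) :
    ∃ rs : List R, rs.length = s ∧ Ul R M rs := by
  obtain ⟨h1, _, _, rs, hl, hm, hr, he⟩ := h
  exact ⟨rs, hl, h1, hm, hr.toIsWeaklyRegular, he⟩

end L7b

open CategoryTheory IsLocalRing RingTheory.Sequence
theorem statement10 (R : Type) [CommRing R] [IsNoetherianRing R] [IsLocalRing R]
    (M : Type) [AddCommGroup M] [Module R M] [Module.Finite R M]
    (N : Type) [AddCommGroup N] [Module R N] [Module.Finite R N]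
    (sM sN : ℕ) (hM : IsUlrich R M sM) (hN : IsUlrich R N sN) :
    (IsRegularLocal R ↔ ProjDimFinite R M) ∧
    (IsRegularLocal R ↔ InjDimFinite R N) ∧
    (IsRegularLocal R ↔ (∃ n : ℕ, 1 ≤ n ∧ depth R N ≤ ((n + sM : ℕ) : ℕ∞) ∧
      ∀ i : ℕ, n ≤ i → i ≤ n + min sM sN → ExtVanish R M N i)) ∧
    (IsRegularLocal R ↔ (∃ n : ℕ, 1 ≤ n ∧
      ∀ i : ℕ, n ≤ i → i ≤ n + min sM sN → TorVanish R M N i)) := by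
  have hdep : depth R N = (sN : ℕ∞) := hN.2.2.1
  obtain ⟨rs, rfl, uM⟩ := hM.ul
  obtain ⟨ts, rfl, uN⟩ := hN.ul
  have toE : ∀ (X Y : Type) [AddCommGroup X] [Module R X] [AddCommGroup Y] [Module R Y] (i : ℕ),
      1 ≤ i → (ExtVanish R X Y i ↔ EV R X Y i) := by
    intro X Y _ _ _ _ i hi
    obtain ⟨j, rfl⟩ : ∃ j, i = j+1 := ⟨i-1, by omega⟩
    exact ext_bridge j
  have toT : ∀ (i : ℕ), 1 ≤ i → (TorVanish R M N i ↔ EV R N (CharacterModule M) i) := by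
    intro i hi
    obtain ⟨j, rfl⟩ : ∃ j, i = j+1 := ⟨i-1, by omega⟩
    exact tor_bridge j
  have key : IsRegularLocal R → ∃ d, PDLT R (kk R) (d+1) :=
    fun h => (RegSeq.of_isRegularLocal h).pd
  refine ⟨⟨fun h => ?_, fun h => ?_⟩, ⟨fun h => ?_, fun h => ?_⟩, ⟨fun h => ?_, fun h => ?_⟩,
    ⟨fun h => ?_, fun h => ?_⟩⟩
  · obtain ⟨d, hd⟩ := key h
    exact ⟨d+1, fun Y i hi => (toE M Y i (by omega)).2 (pd_all hd M Y i hi)⟩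
  · obtain ⟨n, hn⟩ := h
    exact L6 uM (n := n+1) (fun Y _ _ i hi =>
      (toE M Y i (by omega)).1 (hn (ModuleCat.of R Y) i (by omega)))
  · obtain ⟨d, hd⟩ := key h
    exact ⟨d+1, fun Y i hi => (toE Y N i (by omega)).2
      (inj_of_ideals d N (fun I => pd_all hd (R ⧸ I) N (d+1) le_rfl) Y i hi)⟩
  · obtain ⟨n, hn⟩ := h
    exact L6i uN (n := n+1) (fun i hi =>
      (toE (kk R) N i (by omega)).1 (hn (ModuleCat.of R (kk R)) i (by omega)))
  · obtain ⟨d, hd⟩ := key h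
    refine ⟨d + 1 + ts.length, by omega, ?_, fun i hi _ => (toE M N i (by omega)).2
      (pd_all hd M N i (by omega))⟩
    rw [hdep]
    exact_mod_cast (by omega : ts.length ≤ d + 1 + ts.length + rs.length)
  · obtain ⟨n, hn, hdn, hE⟩ := h
    rw [hdep] at hdn
    have hdn' : ts.length ≤ n + rs.length := by exact_mod_cast hdn
    have hE' : ∀ i, n ≤ i → i ≤ n + min rs.length ts.length → EV R M N i :=
      fun i h1 h2 => (toE M N i (by omega)).1 (hE i h1 h2)
    rcases le_total rs.length ts.length with hle | hle
    · rw [min_eq_left hle] at hE'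
      obtain ⟨i, p, hp⟩ := uM.retract
      have h1 : EV R (kk R) N (n + rs.length) :=
        (EV.list_left rs M n uM.wr hE').retract_left i p hp
      exact L6i uN (L7 uN hdn' h1)
    · rw [min_eq_right hle] at hE'
      obtain ⟨i, p, hp⟩ := uN.retract
      have h1 : EV R M (kk R) n := (EV.list_right ts N n uN.wr hE').retract_right i p hp
      exact L6 uM (L5 n M h1)
  · obtain ⟨d, hd⟩ := key h
    exact ⟨d + 1, by omega, fun i hi _ => (toT i (by omega)).2 (pd_all hd N _ i hi)⟩
  · obtain ⟨n, hn, hE⟩ := h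
    have hE' : ∀ i, n ≤ i → i ≤ n + min rs.length ts.length → EV R N (CharacterModule M) i :=
      fun i h1 h2 => (toT i (by omega)).1 (hE i h1 h2)
    rcases le_total rs.length ts.length with hle | hle
    · rw [min_eq_left hle] at hE'
      obtain ⟨i, p, hp⟩ := uM.retract_char
      have h1 : EV R N (kk R) (n + rs.length) :=
        (EV.list_char rs M n uM.wr hE').retract_right i p hp
      exact L6 uN (L5 _ N h1)
    · rw [min_eq_right hle] at hE'
      obtain ⟨i, p, hp⟩ := uN.retract
      have h1 : EV R (kk R) (CharacterModule M) (n + ts.length) :=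
        (EV.list_left ts N n uN.wr hE').retract_left i p hp
      obtain ⟨q, hq⟩ : ∃ q, n + ts.length = q + 1 := ⟨n + ts.length - 1, by omega⟩
      rw [hq] at h1
      exact L6 uM (L8 q M h1)
end

section
/- Let (R, m, k) be a Cohen–Macaulay commutative Noetherian local ring and let M be an Ulrich R-module. For a finitely generated R-module X, let β_n(X) = dim_k Tor_n^R(X, k) denote its n-th Betti number. Then M has maximal complexity and maximal curvature: (i) limsup_{n→∞} β_n(M)^{1/n} = limsup_{n→∞} β_n(k)^{1/n}; and (ii) for every integer b ≥ 0, there exist a real number α > 0 and an integer N such that β_n(M) ≤ α·n^{b−1} for all n ≥ N if and only if there exist a real number α' > 0 and an integer N' such that β_n(k) ≤ α'·n^{b−1} for all n ≥ N'. -/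
open CategoryTheory IsLocalRing

namespace Ulr
open MonoidalCategory

lemma hm_smul {R : Type*} [Ring R] {C : Type*} [Category* C] [Preadditive C] [Linear R C]
    [CategoryWithHomology C]
    {ι : Type*} {c : ComplexShape ι} {K L : HomologicalComplex C c} (r : R) (φ : K ⟶ L) (i : ι) :
    HomologicalComplex.homologyMap (r • φ) i = r • HomologicalComplex.homologyMap φ i :=
  ShortComplex.homologyMap_smul
    (φ := (HomologicalComplex.shortComplexFunctor C c i).map φ) (a := r)

variable (R : Type) [CommRing R] [IsLocalRing R]

noncomputable abbrev kk : ModuleCat R := ModuleCat.of R (R ⧸ maximalIdeal R)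
noncomputable abbrev PP : ProjectiveResolution (kk R) := projectiveResolution (kk R)
noncomputable abbrev T (n : ℕ) (M : ModuleCat R) : ModuleCat R := ((Tor (ModuleCat R) n).obj M).obj (kk R)
noncomputable abbrev Tm (n : ℕ) {M N : ModuleCat R} (f : M ⟶ N) : T R n M ⟶ T R n N :=
  ((Tor (ModuleCat R) n).map f).app (kk R)
/-- the complex M ⊗ P -/
noncomputable abbrev CC (M : ModuleCat R) : ChainComplex (ModuleCat R) ℕ :=
  (((tensoringLeft (ModuleCat R)).obj M).mapHomologicalComplex _).obj (PP R).complex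
noncomputable abbrev Cm {M N : ModuleCat R} (f : M ⟶ N) : CC R M ⟶ CC R N :=
  (NatTrans.mapHomologicalComplex ((tensoringLeft (ModuleCat R)).map f) _).app (PP R).complex
noncomputable abbrev Ti (n : ℕ) (M : ModuleCat R) : T R n M ≅ (CC R M).homology n :=
  (PP R).isoLeftDerivedObj ((tensoringLeft (ModuleCat R)).obj M) n

lemma Tm_eq (n : ℕ) {M N : ModuleCat R} (f : M ⟶ N) :
    Tm R n f = (Ti R n M).hom ≫ HomologicalComplex.homologyMap (Cm R f) n ≫ (Ti R n N).inv :=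
  ProjectiveResolution.leftDerived_app_eq ((tensoringLeft (ModuleCat R)).map f) (PP R) n

lemma Cm_smul (M : ModuleCat R) (r : R) : Cm R (r • 𝟙 M) = r • 𝟙 (CC R M) := by
  ext i : 1
  simp
  rfl

lemma k_smul (r : R) (hr : r ∈ maximalIdeal R) (x : kk R) : r • x = 0 := by
  change R ⧸ maximalIdeal R at x
  obtain ⟨y, rfl⟩ := Ideal.Quotient.mk_surjective x
  exact (Ideal.Quotient.eq_zero_iff_mem).2 (Ideal.mul_mem_right _ _ hr)

lemma Cm_zero (n : ℕ) (M : ModuleCat R) (r : R) (hr : r ∈ maximalIdeal R) :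
    HomologicalComplex.homologyMap (r • 𝟙 (CC R M)) n = 0 := by
  have h1 := Functor.leftDerived_map_eq ((tensoringLeft (ModuleCat R)).obj M) n (0 : kk R ⟶ kk R)
    (P := PP R) (Q := PP R) (r • 𝟙 _) (by
      rw [Functor.map_zero, Limits.comp_zero, Linear.smul_comp, Category.id_comp]
      ext x
      exact k_smul R r hr (((PP R).π.f 0).hom x))
  have h2 := Functor.leftDerived_map_eq ((tensoringLeft (ModuleCat R)).obj M) n (0 : kk R ⟶ kk R)
    (P := PP R) (Q := PP R) 0 (by simp)
  rw [h2] at h1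
  rw [cancel_epi, cancel_mono] at h1
  have h3 : r • 𝟙 (CC R M) = (((tensoringLeft (ModuleCat R)).obj M).mapHomologicalComplex _).map (r • 𝟙 (PP R).complex) := by
    ext i : 1
    simp
  rw [h3]
  refine Eq.trans h1.symm ?_
  exact Functor.map_zero (((tensoringLeft (ModuleCat R)).obj M).mapHomologicalComplex _ ⋙ HomologicalComplex.homologyFunctor _ _ n) _ _

lemma Tm_zero (n : ℕ) (M : ModuleCat R) (r : R) (hr : r ∈ maximalIdeal R) : Tm R n (r • 𝟙 M) = 0 := by
  rw [Tm_eq, Cm_smul, Cm_zero R n M r hr]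
  simp

lemma T_smul (n : ℕ) (M : ModuleCat R) (r : R) (hr : r ∈ maximalIdeal R) (t : T R n M) : r • t = 0 := by
  have h := Cm_zero R n M r hr
  rw [hm_smul, HomologicalComplex.homologyMap_id] at h
  have h2 : (Ti R n M).hom (r • t) = 0 := by
    rw [map_smul]
    exact congrArg (fun f => f.hom ((Ti R n M).hom t)) h
  exact (Ti R n M).toLinearEquiv.map_eq_zero_iff.1 h2

lemma Cm_comp {X Y Z : ModuleCat R} (f : X ⟶ Y) (g : Y ⟶ Z) (h : f ≫ g = 0) : Cm R f ≫ Cm R g = 0 := by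
  ext i : 1
  have : (f ▷ ((PP R).complex.X i)) ≫ (g ▷ ((PP R).complex.X i)) = 0 := by
    rw [← MonoidalCategory.comp_whiskerRight, h]
    simp
  exact this

lemma Sx (S : ShortComplex (ModuleCat R)) (hS : S.ShortExact) :
    (ShortComplex.mk (Cm R S.f) (Cm R S.g) (Cm_comp R _ _ S.zero)).ShortExact := by
  apply HomologicalComplex.shortExact_of_degreewise_shortExact
  intro i
  have : Module.Flat R ((PP R).complex.X i) := by
    have := (IsProjective.iff_projective ((PP R).complex.X i)).2 ((PP R).projective i)
    infer_instance
  exact hS.map_of_exact (tensorRight ((PP R).complex.X i))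

lemma exact_transport {A B C A' B' C' : ModuleCat R} (a : A ≅ A') (b : B ≅ B') (c : C ≅ C')
    (f : A ⟶ B) (g : B ⟶ C) (f' : A' ⟶ B') (g' : B' ⟶ C') (w : f' ≫ g' = 0)
    (hf : f = a.hom ≫ f' ≫ b.inv) (hg : g = b.hom ≫ g' ≫ c.inv) (h : (ShortComplex.mk f' g' w).Exact) :
    Function.Exact f.hom g.hom := by
  rw [ShortComplex.ShortExact.moduleCat_exact_iff_function_exact] at h
  subst hf hg
  intro y
  constructor
  · intro hy
    have : g' (b.hom y) = 0 := by
      have := congrArg c.hom hy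
      simpa using this
    obtain ⟨x, hx⟩ := (h _).1 this
    refine ⟨a.inv x, ?_⟩
    have := congrArg b.inv hx
    simpa using this
  · rintro ⟨x, rfl⟩
    have := (h (f' (a.hom x))).2 ⟨_, rfl⟩
    have := congrArg c.inv this
    simpa using this

lemma les (S : ShortComplex (ModuleCat R)) (hS : S.ShortExact) (n : ℕ) :
    Function.Exact (Tm R n S.f).hom (Tm R n S.g).hom ∧
    ∃ δ : T R (n+1) S.X₃ ⟶ T R n S.X₁, Function.Exact (Tm R (n+1) S.g).hom δ.hom ∧
      Function.Exact δ.hom (Tm R n S.f).hom := by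
  have h := Sx R S hS
  refine ⟨?_, (Ti R _ _).hom ≫ h.δ (n+1) n rfl ≫ (Ti R _ _).inv, ?_, ?_⟩
  · exact exact_transport R (Ti R _ _) (Ti R _ _) (Ti R _ _) _ _ _ _ _ (Tm_eq R _ _) (Tm_eq R _ _) (h.homology_exact₂ n)
  · exact exact_transport R (Ti R _ _) (Ti R _ _) (Ti R _ _) _ _ _ _ _ (Tm_eq R _ _) rfl (h.homology_exact₃ (n+1) n rfl)
  · exact exact_transport R (Ti R _ _) (Ti R _ _) (Ti R _ _) _ _ _ _ _ rfl (Tm_eq R _ _) (h.homology_exact₁ (n+1) n rfl)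

lemma flat_zero (M : ModuleCat R) [Module.Flat R M] (n : ℕ) : Subsingleton (T R (n+1) M) := by
  have : Limits.IsZero ((CC R M).homology (n+1)) := by
    rw [← HomologicalComplex.exactAt_iff_isZero_homology]
    have h := (PP R).complex_exactAt_succ n
    exact ShortComplex.Exact.map h (tensorLeft M)
  exact ModuleCat.subsingleton_of_isZero (this.of_iso (Ti R _ _))

lemma T0_finite (M : ModuleCat R) [Module.Finite R M] : Module.Finite R (T R 0 M) := by
  have : Limits.PreservesFiniteColimits ((tensoringLeft (ModuleCat R)).obj M) :=
    inferInstanceAs (Limits.PreservesFiniteColimits (tensorLeft M))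
  have e := (((tensoringLeft (ModuleCat R)).obj M).leftDerivedZeroIsoSelf).app (kk R)
  have : Module.Finite R (((tensoringLeft (ModuleCat R)).obj M).obj (kk R)) :=
    inferInstanceAs (Module.Finite R (TensorProduct R M (kk R)))
  exact Module.Finite.equiv e.toLinearEquiv.symm

variable [IsNoetherianRing R]

lemma T_finite (n : ℕ) : ∀ (M : ModuleCat R) [Module.Finite R M], Module.Finite R (T R n M) := by
  induction n with
  | zero => intro M _; exact T0_finite R M
  | succ n ih =>
    intro M _
    obtain ⟨m, f, hf⟩ := Module.Finite.exists_fin' R M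
    let S : ShortComplex (ModuleCat R) := ShortComplex.mk
      (ModuleCat.ofHom (LinearMap.ker f).subtype) (ModuleCat.ofHom f) (by ext x; exact x.2)
    have hS : S.ShortExact := ModuleCat.shortComplex_shortExact S
      (by intro y; exact ⟨fun h => ⟨⟨y, h⟩, rfl⟩, by rintro ⟨x, rfl⟩; exact x.2⟩)
      Subtype.val_injective hf
    obtain ⟨-, δ, h1, -⟩ := les R S hS n
    have : Module.Flat R S.X₂ := inferInstanceAs (Module.Flat R (Fin m → R))
    have := flat_zero R S.X₂ n
    have hinj : Function.Injective δ.hom := by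
      rw [← LinearMap.ker_eq_bot, eq_bot_iff]
      intro y hy
      obtain ⟨x, rfl⟩ := (h1 y).1 hy
      rw [Subsingleton.elim x 0, map_zero]; exact Submodule.zero_mem _
    have : Module.Finite R S.X₁ := inferInstanceAs (Module.Finite R (LinearMap.ker f))
    have := ih S.X₁
    exact Module.Finite.of_injective δ.hom hinj

lemma betti_length (M : Type) [AddCommGroup M] [Module R M] [Module.Finite R M] (n : ℕ) :
    Module.length R (T R n (ModuleCat.of R M)) = (betti R M n : ℕ∞) := by
  have hf := T_finite R n (ModuleCat.of R M)
  have hb : (maximalIdeal R • (⊤ : Submodule R (T R n (ModuleCat.of R M)))) = ⊥ := by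
    rw [eq_bot_iff, Submodule.smul_le]
    intro r hr t _
    exact T_smul R n _ r hr t
  let e := Submodule.quotEquivOfEqBot _ hb
  rw [← e.length_eq]
  unfold betti
  let _ : Field (R ⧸ maximalIdeal R) := Ideal.Quotient.field _
  have hfin : Module.Finite (R ⧸ maximalIdeal R) (T R n (ModuleCat.of R M) ⧸
    (maximalIdeal R • (⊤ : Submodule R (T R n (ModuleCat.of R M))))) :=
    Module.Finite.of_restrictScalars_finite R _ _
  refine Eq.trans ?_ (Module.length_eq_finrank (R ⧸ maximalIdeal R) _)
  exact (Module.length_eq_of_surjective (S := R) (R := R ⧸ maximalIdeal R) (M := T R n (ModuleCat.of R M) ⧸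
    (maximalIdeal R • (⊤ : Submodule R (T R n (ModuleCat.of R M))))) Ideal.Quotient.mk_surjective)

lemma step (M : Type) [AddCommGroup M] [Module R M] [Module.Finite R M] (x : R)
    (hx : x ∈ maximalIdeal R) (hreg : IsSMulRegular M x) (n : ℕ) :
    betti R (QuotSMulTop x M) (n+1) = betti R M (n+1) + betti R M n := by
  let S : ShortComplex (ModuleCat R) := ShortComplex.mk (X₁ := ModuleCat.of R M) (X₂ := ModuleCat.of R M)
    (X₃ := ModuleCat.of R (QuotSMulTop x M))
    (x • 𝟙 (ModuleCat.of R M)) (ModuleCat.ofHom (Submodule.mkQ _)) (by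
      ext y; exact (Submodule.Quotient.mk_eq_zero _).2 (Submodule.smul_mem_pointwise_smul y x ⊤ trivial))
  have hS : S.ShortExact := ModuleCat.shortComplex_shortExact S
    (by
      intro y
      refine ⟨fun h => ?_, ?_⟩
      · obtain ⟨z, -, hz⟩ := (Submodule.Quotient.mk_eq_zero _).1 h
        exact ⟨z, hz⟩
      · rintro ⟨z, rfl⟩
        exact (Submodule.Quotient.mk_eq_zero _).2 (Submodule.smul_mem_pointwise_smul z x ⊤ trivial))
    hreg (Submodule.mkQ_surjective _)
  obtain ⟨-, δ, h1, h2⟩ := les R S hS n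
  obtain ⟨h3, -⟩ := les R S hS (n+1)
  have z1 : (Tm R n S.f) = 0 := Tm_zero R n _ x hx
  have z2 : (Tm R (n+1) S.f) = 0 := Tm_zero R (n+1) _ x hx
  rw [z1] at h2
  rw [z2] at h3
  have i1 : Function.Injective (Tm R (n+1) S.g).hom := by
    rw [← LinearMap.ker_eq_bot, eq_bot_iff]
    intro y hy
    obtain ⟨x, rfl⟩ := (h3 y).1 hy
    exact Submodule.zero_mem _
  have i2 : Function.Surjective δ.hom := fun y => (h2 y).1 rfl
  have key := Module.length_eq_add_of_exact _ _ i1 i2 h1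
  have a1 := betti_length R (QuotSMulTop x M) (n+1)
  have a2 := betti_length R M (n+1)
  have a3 := betti_length R M n
  have : (betti R (QuotSMulTop x M) (n+1) : ℕ∞) = betti R M (n+1) + betti R M n := by
    rw [← a1, ← a2, ← a3]; exact key
  exact_mod_cast this

lemma betti_congr {M N : Type} [AddCommGroup M] [Module R M] [Module.Finite R M]
    [AddCommGroup N] [Module R N] [Module.Finite R N] (e : M ≃ₗ[R] N) (n : ℕ) :
    betti R M n = betti R N n := by
  have := (((Tor (ModuleCat R) n).mapIso e.toModuleIso).app (kk R)).toLinearEquiv.length_eq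
  have a2 := betti_length R M n
  have a3 := betti_length R N n
  have : (betti R M n : ℕ∞) = betti R N n := by rw [← a2, ← a3]; exact this
  exact_mod_cast this

lemma betti_pow_le (V : Type) [AddCommGroup V] [Module R V] [Module.Finite R V] (n m : ℕ) :
    betti R (Fin m → V) n ≤ m * betti R V n := by
  induction m with
  | zero =>
    have : Module.length R (T R n (ModuleCat.of R (Fin 0 → V))) = 0 := by
      rw [Module.length_eq_zero_iff]
      have h0 : Subsingleton (ModuleCat.of R (Fin 0 → V)) := inferInstanceAs (Subsingleton (Fin 0 → V))
      refine ⟨fun a b => ?_⟩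
      have h : (0 : R) • 𝟙 (ModuleCat.of R (Fin 0 → V)) = 𝟙 _ := by
        ext x : 2; exact Subsingleton.elim _ _
      have h2 := Tm_zero R n (ModuleCat.of R (Fin 0 → V)) 0 (Submodule.zero_mem _)
      rw [h] at h2
      have h3 : Tm R n (𝟙 (ModuleCat.of R (Fin 0 → V))) = 𝟙 _ := by
        simp only [Tm, CategoryTheory.Functor.map_id]; rfl
      rw [h3] at h2
      have ha := congrArg (fun f => f.hom a) h2
      have hb := congrArg (fun f => f.hom b) h2
      exact ha.trans hb.symm
    rw [betti_length] at this
    have : betti R (Fin 0 → V) n = 0 := by exact_mod_cast this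
    omega
  | succ m ih =>
    let p : (Fin (m+1) → V) →ₗ[R] (Fin m → V) := LinearMap.funLeft R V Fin.succ
    let S : ShortComplex (ModuleCat R) := ShortComplex.mk
      (ModuleCat.ofHom (LinearMap.single R (fun _ : Fin (m+1) => V) 0)) (ModuleCat.ofHom p) (by
        ext x : 2; funext i; exact Pi.single_eq_of_ne (M := fun _ : Fin (m+1) => V) (Fin.succ_ne_zero i) x)
    have hS : S.ShortExact := ModuleCat.shortComplex_shortExact S
      (by
        intro y
        refine ⟨fun h => ⟨y 0, ?_⟩, ?_⟩
        · funext i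
          refine Fin.cases ?_ (fun j => ?_) i
          · exact Pi.single_eq_same (M := fun _ : Fin (m+1) => V) 0 (y 0)
          · exact (Pi.single_eq_of_ne (M := fun _ : Fin (m+1) => V) (Fin.succ_ne_zero j) (y 0)).trans (congrFun h j).symm
        · rintro ⟨z, rfl⟩
          funext j
          exact Pi.single_eq_of_ne (M := fun _ : Fin (m+1) => V) (Fin.succ_ne_zero j) z)
      (Pi.single_injective (M := fun _ : Fin (m+1) => V) 0)
      (fun y => ⟨Fin.cons 0 y, by funext j; rfl⟩)
    obtain ⟨h, -⟩ := les R S hS n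
    have key : Module.length R (T R n (ModuleCat.of R (Fin (m+1) → V))) ≤
        Module.length R (T R n (ModuleCat.of R V)) + Module.length R (T R n (ModuleCat.of R (Fin m → V))) := by
      have e := Module.length_eq_add_of_exact (LinearMap.ker (Tm R n S.g).hom).subtype
        (LinearMap.rangeRestrict (Tm R n S.g).hom) Subtype.val_injective (LinearMap.surjective_rangeRestrict _)
        (by rw [LinearMap.exact_iff]; simp)
      refine e.le.trans (add_le_add ?_ ?_)
      · rw [LinearMap.exact_iff.1 h]
        exact Module.length_le_of_surjective _ (LinearMap.surjective_rangeRestrict _)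
      · exact Module.length_le_of_injective (LinearMap.range (Tm R n S.g).hom).subtype Subtype.val_injective
    rw [betti_length, betti_length, betti_length] at key
    have : betti R (Fin (m+1) → V) n ≤ betti R V n + betti R (Fin m → V) n := by exact_mod_cast key
    linarith

lemma betti_le_pow (V : Type) [AddCommGroup V] [Module R V] [Module.Finite R V] (n m : ℕ) :
    betti R V n ≤ betti R (Fin (m+1) → V) n := by
  let i : ModuleCat.of R V ⟶ ModuleCat.of R (Fin (m+1) → V) := ModuleCat.ofHom (LinearMap.single R (fun _ : Fin (m+1) => V) 0)
  let p : ModuleCat.of R (Fin (m+1) → V) ⟶ ModuleCat.of R V := ModuleCat.ofHom (LinearMap.proj 0)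
  have hip : i ≫ p = 𝟙 _ := by ext x; simp [i, p]
  have h3 : Tm R n i ≫ Tm R n p = 𝟙 _ := by
    rw [Tm, Tm, ← NatTrans.comp_app, ← Functor.map_comp, hip, CategoryTheory.Functor.map_id]; rfl
  have hinj : Function.Injective (Tm R n i).hom := by
    intro a b hab
    have ha := congrArg (fun f => f.hom a) h3
    have hb := congrArg (fun f => f.hom b) h3
    exact ha.symm.trans ((congrArg (Tm R n p).hom hab).trans hb)
  have key := Module.length_le_of_injective _ hinj
  rw [betti_length, betti_length] at key
  exact_mod_cast key

/-- same limsup of roots and same polynomial bounds -/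
def Concl (f g : ℕ → ℕ) : Prop :=
  Filter.limsup (fun n : ℕ => (f n : ℝ) ^ ((n : ℝ)⁻¹)) Filter.atTop =
      Filter.limsup (fun n : ℕ => (g n : ℝ) ^ ((n : ℝ)⁻¹)) Filter.atTop ∧
    ∀ b : ℕ,
      ((∃ α : ℝ, 0 < α ∧ ∃ N : ℕ, ∀ n : ℕ, N ≤ n →
          (f n : ℝ) ≤ α * (n : ℝ) ^ ((b : ℝ) - 1)) ↔
       (∃ α : ℝ, 0 < α ∧ ∃ N : ℕ, ∀ n : ℕ, N ≤ n →
          (g n : ℝ) ≤ α * (n : ℝ) ^ ((b : ℝ) - 1)))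

lemma Concl.trans {f g h : ℕ → ℕ} (a : Concl f g) (b : Concl g h) : Concl f h :=
  ⟨a.1.trans b.1, fun c => (a.2 c).trans (b.2 c)⟩

lemma Concl.symm {f g : ℕ → ℕ} (a : Concl f g) : Concl g f :=
  ⟨a.1.symm, fun c => (a.2 c).symm⟩

lemma sInf_aux (A B : Set ℝ) (hB : ∀ a ∈ B, 0 ≤ a)
    (h1 : ∀ a ∈ A, ∀ ε > 0, a + ε ∈ B) (hne : A.Nonempty) : sInf B ≤ sInf A := by
  apply le_of_forall_pos_le_add
  intro ε hε
  rw [← sub_le_iff_le_add]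
  refine le_csInf hne fun a ha => ?_
  rw [sub_le_iff_le_add]
  exact csInf_le ⟨0, hB⟩ (h1 a ha ε hε)

lemma sInf_eq_aux (A B : Set ℝ) (hA : ∀ a ∈ A, 0 ≤ a) (hB : ∀ a ∈ B, 0 ≤ a)
    (h1 : ∀ a ∈ A, ∀ ε > 0, a + ε ∈ B) (h2 : ∀ a ∈ B, ∀ ε > 0, a + ε ∈ A) : sInf A = sInf B := by
  rcases A.eq_empty_or_nonempty with h | h
  · rcases B.eq_empty_or_nonempty with h' | ⟨b, hb⟩
    · rw [h, h']
    · have := h2 b hb 1 one_pos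
      rw [h] at this; exact this.elim
  · have h' : B.Nonempty := by
      obtain ⟨a, ha⟩ := h
      exact ⟨_, h1 a ha 1 one_pos⟩
    exact le_antisymm (sInf_aux B A hA h2 h') (sInf_aux A B hB h1 h)

lemma root_aux (f : ℕ → ℕ) (K a ε : ℝ) (hK : 0 < K) (ha : 0 < a) (hε : 0 < ε)
    (h : ∀ᶠ n : ℕ in Filter.atTop, (f n : ℝ) ≤ K * a ^ n) :
    ∀ᶠ n : ℕ in Filter.atTop, (f n : ℝ) ^ ((n : ℝ)⁻¹) ≤ a + ε := by
  have t : Filter.Tendsto (fun n : ℕ => K ^ ((n : ℝ)⁻¹) * a) Filter.atTop (nhds (K ^ (0:ℝ) * a)) := by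
    refine Filter.Tendsto.mul_const _ ?_
    exact Filter.Tendsto.rpow tendsto_const_nhds (tendsto_inv_atTop_nhds_zero_nat (𝕜 := ℝ)) (Or.inl hK.ne')
  rw [Real.rpow_zero, one_mul] at t
  have t2 := t.eventually_le_const (show a < a + ε by linarith)
  filter_upwards [h, t2, Filter.eventually_ge_atTop 1] with n h1 h2 h3
  refine le_trans ?_ h2
  calc (f n : ℝ) ^ ((n : ℝ)⁻¹) ≤ (K * a ^ n) ^ ((n : ℝ)⁻¹) := by
        apply Real.rpow_le_rpow (by positivity) h1 (by positivity)
    _ = K ^ ((n : ℝ)⁻¹) * a := by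
        rw [Real.mul_rpow hK.le (by positivity), Real.pow_rpow_inv_natCast ha.le (by omega)]

lemma pow_aux (f : ℕ → ℕ) (a : ℝ)
    (h : ∀ᶠ n : ℕ in Filter.atTop, (f n : ℝ) ^ ((n : ℝ)⁻¹) ≤ a) :
    ∀ᶠ n : ℕ in Filter.atTop, (f n : ℝ) ≤ a ^ n := by
  filter_upwards [h, Filter.eventually_ge_atTop 1] with n h1 h3
  have := pow_le_pow_left₀ (by positivity) h1 n
  rwa [Real.rpow_inv_natCast_pow (by positivity) (by omega)] at this

lemma concl_of (f g : ℕ → ℕ) (C : ℕ) (hC : 0 < C)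
    (h1 : ∀ n, f (n+1) ≤ C * g (n+1)) (h2 : ∀ n, g (n+1) ≤ C * (f (n+1) + f n)) : Concl f g := by
  have hC' : (0:ℝ) < C := by exact_mod_cast hC
  have nn : ∀ (f : ℕ → ℕ), ∀ a ∈ {a : ℝ | ∀ᶠ n : ℕ in Filter.atTop, (f n : ℝ) ^ ((n : ℝ)⁻¹) ≤ a}, 0 ≤ a := by
    intro f a ha
    obtain ⟨n, hn⟩ := (show ∀ᶠ n : ℕ in Filter.atTop, _ from ha).exists
    exact le_trans (by positivity) hn
  have h1' : ∀ n, (f (n+1) : ℝ) ≤ C * g (n+1) := fun n => by exact_mod_cast h1 n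
  have h2' : ∀ n, (g (n+1) : ℝ) ≤ C * (f (n+1) + f n) := fun n => by exact_mod_cast h2 n
  refine ⟨?_, fun b => ⟨?_, ?_⟩⟩
  · rw [Filter.limsup_eq, Filter.limsup_eq]
    refine sInf_eq_aux _ _ (nn f) (nn g) ?_ ?_
    · intro a ha ε hε
      have ha0 := nn f a ha
      have hp : ∀ᶠ n : ℕ in Filter.atTop, (f n : ℝ) ≤ (a + ε/2) ^ n := by
        refine pow_aux f _ ?_
        filter_upwards [ha] with n hn
        linarith
      have hpos : 0 < a + ε/2 := by linarith
      generalize hc : a + ε/2 = c at hp hpos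
      have : a + ε = c + ε/2 := by linarith
      rw [this]
      refine root_aux g (C * (1 + c⁻¹)) c (ε/2) (by positivity) hpos (by linarith) ?_
      obtain ⟨N, hN⟩ := Filter.eventually_atTop.1 hp
      refine Filter.eventually_atTop.2 ⟨N+1, fun n hn => ?_⟩
      obtain ⟨m, rfl⟩ : ∃ m, n = m+1 := ⟨n-1, by omega⟩
      refine (h2' m).trans ?_
      have e1 := hN (m+1) (by omega)
      have e2 := hN m (by omega)
      calc (C:ℝ) * (f (m+1) + f m) ≤ C * (c^(m+1) + c^m) := by gcongr
        _ = C * (1 + c⁻¹) * c^(m+1) := by field_simp; ring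
    · intro a ha ε hε
      have ha0 := nn g a ha
      have hp : ∀ᶠ n : ℕ in Filter.atTop, (g n : ℝ) ≤ (a + ε/2) ^ n := by
        refine pow_aux g _ ?_
        filter_upwards [ha] with n hn
        linarith
      have hpos : 0 < a + ε/2 := by linarith
      have : a + ε = (a + ε/2) + ε/2 := by linarith
      rw [this]
      refine root_aux f C _ (ε/2) hC' hpos (by linarith) ?_
      filter_upwards [hp, Filter.eventually_ge_atTop 1] with n hn h1n
      obtain ⟨m, rfl⟩ : ∃ m, n = m+1 := ⟨n-1, by omega⟩
      exact (h1' m).trans (by gcongr)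
  · rintro ⟨α, hα, N, h⟩
    refine ⟨C * (α * 3), by positivity, N + 2, fun n hn => ?_⟩
    obtain ⟨m, rfl⟩ : ∃ m, n = m+1 := ⟨n-1, by omega⟩
    have e1 := h (m+1) (by omega)
    have e2 := h m (by omega)
    refine (h2' m).trans ?_
    have hm : (1:ℝ) ≤ m := by exact_mod_cast (by omega : 1 ≤ m)
    have e3 : (m:ℝ) ^ ((b:ℝ) - 1) ≤ 2 * ((m+1 : ℕ):ℝ) ^ ((b:ℝ) - 1) := by
      push_cast
      rw [Real.rpow_sub_one (by positivity), Real.rpow_sub_one (by positivity), Real.rpow_natCast, Real.rpow_natCast]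
      have e4 : (m:ℝ)^b ≤ (m+1:ℝ)^b := by gcongr; linarith
      rw [div_le_iff₀ (by positivity)]
      have e5 : (1:ℝ) ≤ 2 / (m+1) * m := by
        rw [div_mul_eq_mul_div, le_div_iff₀ (by positivity)]; linarith
      calc (m:ℝ)^b ≤ (m+1:ℝ)^b * 1 := by linarith
        _ ≤ (m+1:ℝ)^b * (2 / (m+1) * m) := by gcongr
        _ = _ := by ring
    rw [mul_assoc]
    gcongr
    nlinarith
  · rintro ⟨α, hα, N, h⟩
    refine ⟨C * α, by positivity, N + 1, fun n hn => ?_⟩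
    obtain ⟨m, rfl⟩ : ∃ m, n = m+1 := ⟨n-1, by omega⟩
    refine (h1' m).trans ?_
    rw [mul_assoc]
    gcongr
    exact h _ (by omega)

lemma base (M : Type) [AddCommGroup M] [Module R M] [Module.Finite R M] [Nontrivial M]
    (h : (maximalIdeal R) • (⊤ : Submodule R M) = ⊥) :
    Concl (betti R M) (betti R (R ⧸ maximalIdeal R)) := by
  let _ : Field (R ⧸ maximalIdeal R) := Ideal.Quotient.field _
  have ht : Module.IsTorsionBySet R M (maximalIdeal R : Set R) := by
    rintro x ⟨a, ha⟩
    have : a • x ∈ (maximalIdeal R) • (⊤ : Submodule R M) := Submodule.smul_mem_smul ha trivial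
    rw [h] at this
    exact this
  let _ := ht.module
  have : IsScalarTower R (R ⧸ maximalIdeal R) M := ht.isScalarTower
  have : Module.Finite (R ⧸ maximalIdeal R) M := Module.Finite.of_restrictScalars_finite R _ _
  have hpos : 0 < Module.finrank (R ⧸ maximalIdeal R) M := Module.finrank_pos
  have e := (Module.finBasis (R ⧸ maximalIdeal R) M).equivFun.restrictScalars R
  generalize Module.finrank (R ⧸ maximalIdeal R) M = d at e hpos
  obtain ⟨m, rfl⟩ : ∃ m, d = m+1 := ⟨d-1, by omega⟩
  have he := fun n => betti_congr R e n
  refine concl_of _ _ (m+1) (by omega) (fun n => ?_) (fun n => ?_)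
  · rw [he]; exact betti_pow_le R _ _ _
  · rw [he]
    refine (betti_le_pow R (R ⧸ maximalIdeal R) (n+1) m).trans ?_
    nlinarith [Nat.zero_le (betti R M n), Nat.zero_le (m * betti R M n), Nat.zero_le (m * betti R (Fin (m + 1) → R ⧸ maximalIdeal R) (n+1))]

lemma main (rs : List R) : ∀ (M : Type) [AddCommGroup M] [Module R M] [Module.Finite R M]
    (_ : ∀ x ∈ rs, x ∈ maximalIdeal R) (_ : RingTheory.Sequence.IsRegular M rs)
    (_ : (maximalIdeal R) • (⊤ : Submodule R M) ≤ (Ideal.ofList rs) • ⊤),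
    Concl (betti R M) (betti R (R ⧸ maximalIdeal R)) := by
  induction rs with
  | nil =>
    intro M _ _ _ _ hr h
    have : Nontrivial M := hr.nontrivial
    refine base R M (eq_bot_iff.2 (h.trans (by simp)))
  | cons x rs ih =>
    intro M _ _ _ hx hr h
    rw [RingTheory.Sequence.isRegular_cons_iff] at hr
    refine Concl.trans (g := betti R (QuotSMulTop x M)) ?_ (ih _ (fun y hy => hx y (by simp [hy])) hr.2 ?_)
    · refine concl_of _ _ 1 one_pos (fun n => ?_) (fun n => ?_)
      · rw [step R M x (hx x (by simp)) hr.1]; omega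
      · rw [step R M x (hx x (by simp)) hr.1]; omega
    · open scoped Pointwise in
      have hm := Submodule.map_mono (f := Submodule.mkQ (x • (⊤ : Submodule R M))) h
      rw [Submodule.map_smul'', Submodule.map_smul'', Submodule.map_top, Submodule.range_mkQ,
        Ideal.ofList_cons, Submodule.sup_smul] at hm
      refine hm.trans (sup_le ?_ le_rfl)
      rw [Submodule.smul_le]
      intro r hr y _
      obtain ⟨c, rfl⟩ := Ideal.mem_span_singleton'.1 hr
      obtain ⟨z, rfl⟩ := Submodule.mkQ_surjective _ y
      have : (c * x) • (Submodule.mkQ _ : M →ₗ[R] QuotSMulTop x M) z = 0 := by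
        rw [← map_smul, mul_comm, mul_smul]
        exact (Submodule.Quotient.mk_eq_zero _).2 (Submodule.smul_mem_pointwise_smul (c • z) x ⊤ trivial)
      rw [this]
      exact Submodule.zero_mem _

end Ulr

theorem statement11 (R : Type) [CommRing R] [IsNoetherianRing R] [IsLocalRing R]
    (hCM : (depth R R : WithBot ℕ∞) = ringKrullDim R)
    (M : Type) [AddCommGroup M] [Module R M] [Module.Finite R M]
    (s : ℕ) (hM : IsUlrich R M s) :
    Filter.limsup (fun n : ℕ => (betti R M n : ℝ) ^ ((n : ℝ)⁻¹)) Filter.atTop =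
      Filter.limsup (fun n : ℕ =>
        (betti R (R ⧸ maximalIdeal R) n : ℝ) ^ ((n : ℝ)⁻¹)) Filter.atTop ∧
    ∀ b : ℕ,
      ((∃ α : ℝ, 0 < α ∧ ∃ N : ℕ, ∀ n : ℕ, N ≤ n →
          (betti R M n : ℝ) ≤ α * (n : ℝ) ^ ((b : ℝ) - 1)) ↔
       (∃ α : ℝ, 0 < α ∧ ∃ N : ℕ, ∀ n : ℕ, N ≤ n →
          (betti R (R ⧸ maximalIdeal R) n : ℝ) ≤ α * (n : ℝ) ^ ((b : ℝ) - 1))) := by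
  obtain ⟨-, -, -, rs, -, hx, hr, h⟩ := hM
  exact Ulr.main R rs M hx hr h.le
end
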